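/- arXiv:1005.5673 — 3 statements merged into one kernel-verified Lean document; each statement's English description precedes it below -/
import Mathlib

section
/- Let n > 1, n' = n/(n−1), let βₙ be the volume of the unit ball of ℝⁿ and τₙ = n·βₙ^{1/n}. Then for every f ∈ Lip₀(ℝⁿ): ‖f‖_{L(n',1)} := ∫₀^∞ t^{1/n' − 1} f*(t) dt ≤ n'·τₙ^{−1} ∫_{ℝⁿ} |∇f(x)| dx. -/
open MeasureTheory Set Filter Topology
open scoped ENNReal NNReal

noncomputable section

/-- The distribution function `μ_f(t) = μ{x : |f x| > t}` (as a real number). -/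
def distrib {α : Type*} [MeasurableSpace α] (μ : Measure α) (f : α → ℝ) (t : ℝ) : ℝ :=
  (μ {x | t < |f x|}).toReal

/-- The decreasing rearrangement `f*_μ(s) = inf{t ≥ 0 : μ_f(t) ≤ s}`. -/
def rearr {α : Type*} [MeasurableSpace α] (μ : Measure α) (f : α → ℝ) (s : ℝ) : ℝ :=
  sInf {t : ℝ | 0 ≤ t ∧ distrib μ f t ≤ s}

/-- The maximal function `f**_μ(t) = (1/t) ∫₀ᵗ f*_μ(s) ds`. -/
def rearr2 {α : Type*} [MeasurableSpace α] (μ : Measure α) (f : α → ℝ) (t : ℝ) : ℝ :=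
  (1 / t) * ∫ s in (0:ℝ)..t, rearr μ f s

/-- The modulus of the gradient `|∇f|(x) = limsup_{d(x,y)→0} |f x - f y| / d(x,y)`. -/
def gradMod {Ω : Type*} [MetricSpace Ω] (f : Ω → ℝ) (x : Ω) : ℝ :=
  limsup (fun y => |f x - f y| / dist x y) (𝓝[≠] x)

/-- The Minkowski content `μ⁺(A) = liminf_{h→0⁺} (μ(A_h) - μ(A))/h`. -/
def minkContent {Ω : Type*} [MetricSpace Ω] [MeasurableSpace Ω] (μ : Measure Ω)
    (A : Set Ω) : ℝ :=
  liminf (fun h => ((μ (Metric.thickening h A)).toReal - (μ A).toReal) / h) (𝓝[>] 0)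

/-- The isoperimetric profile: the (pointwise maximal) function with
`μ⁺(A) ≥ I(μ(A))` for all Borel sets `A`. -/
def isoProfile {Ω : Type*} [MetricSpace Ω] [MeasurableSpace Ω] (μ : Measure Ω) (t : ℝ) : ℝ :=
  sInf (minkContent μ '' {A : Set Ω | MeasurableSet A ∧ (μ A).toReal = t})

/-- Condition 1': the isoperimetric profile is continuous, positive on `(0,1)`,
and vanishes at `0`. -/
def Condition1' {Ω : Type*} [MetricSpace Ω] [MeasurableSpace Ω] (μ : Measure Ω) : Prop :=
  ContinuousOn (isoProfile μ) (Icc 0 1) ∧ (∀ t ∈ Ioo (0:ℝ) 1, 0 < isoProfile μ t) ∧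
    isoProfile μ 0 = 0

/-- Condition 2: for Lipschitz `f` and every `c`, `|∇f| = 0` μ-a.e. on `{f = c}`. -/
def Condition2 {Ω : Type*} [MetricSpace Ω] [MeasurableSpace Ω] (μ : Measure Ω) : Prop :=
  ∀ f : Ω → ℝ, (∃ K, LipschitzWith K f) → ∀ c : ℝ,
    ∀ᵐ x ∂(μ.restrict {x | f x = c}), gradMod f x = 0

/-- The weights `w_q` built from the isoperimetric profile. -/
def wq (I : ℝ → ℝ) (q t : ℝ) : ℝ :=
  if q = 1 then sInf ((fun s => I s / s) '' Ioo 0 t)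
  else ((1 / t) * ∫ s in (0:ℝ)..t, (s / I s) ^ (q / (q - 1))) ^ ((1 - q) / q)

/-- Local absolute continuity on `(0,1)`. -/
def LocAbsContOn01 (g : ℝ → ℝ) : Prop :=
  ∀ a b : ℝ, 0 < a → a < b → b < 1 → ∀ ε > 0, ∃ δ > 0,
    ∀ (n : ℕ) (c d : Fin n → ℝ),
      (∀ k, a ≤ c k ∧ c k ≤ d k ∧ d k ≤ b) →
      (Pairwise fun j k => Ioo (c j) (d j) ∩ Ioo (c k) (d k) = ∅) →
      (∑ k, (d k - c k)) ≤ δ → (∑ k, |g (d k) - g (c k)|) ≤ ε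

open scoped Pointwise

lemma bm1_compact (K L : Set ℝ) (hK : IsCompact K) (hL : IsCompact L)
    (nK : K.Nonempty) (nL : L.Nonempty) (C : Set ℝ) (hC : ∀ x ∈ K, ∀ y ∈ L, x + y ∈ C) :
    volume K + volume L ≤ volume C := by
  obtain ⟨k, hk, hkm⟩ := hK.exists_isGreatest nK
  obtain ⟨l, hl, hlm⟩ := hL.exists_isLeast nL
  have h1 : volume ((fun x => x + l) '' K) = volume K := by
    rw [Set.image_add_right]; simp
  have h2 : volume ((fun x => k + x) '' L) = volume L := by
    rw [Set.image_add_left]; simp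
  have hm : MeasurableSet ((fun x => k + x) '' L) :=
    (hL.image (by fun_prop)).measurableSet
  have hd : AEDisjoint volume ((fun x => x + l) '' K) ((fun x => k + x) '' L) := by
    refine measure_mono_null (t := {k + l}) ?_ (by simp)
    rintro z ⟨⟨x, hx, rfl⟩, ⟨y, hy, hxy⟩⟩
    have a1 := hkm hx
    have a2 := hlm hy
    simp only [mem_singleton_iff] at *
    linarith
  rw [← h1, ← h2, ← measure_union₀ hm.nullMeasurableSet hd]
  apply measure_mono
  rintro z (⟨x, hx, rfl⟩ | ⟨x, hx, rfl⟩)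
  · exact hC _ hx _ hl
  · exact hC _ hk _ hx

lemma bm1 (A B C : Set ℝ) (hA : MeasurableSet A) (hB : MeasurableSet B)
    (nA : A.Nonempty) (nB : B.Nonempty) (hC : ∀ x ∈ A, ∀ y ∈ B, x + y ∈ C) :
    volume A + volume B ≤ volume C := by
  obtain ⟨a, ha⟩ := nA
  obtain ⟨b, hb⟩ := nB
  by_cases hA0 : volume A = 0
  · rw [hA0, zero_add]
    have h2 : volume ((fun x => a + x) '' B) = volume B := by
      rw [Set.image_add_left]; simp
    rw [← h2]
    apply measure_mono
    rintro z ⟨x, hx, rfl⟩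
    exact hC _ ha _ hx
  by_cases hB0 : volume B = 0
  · rw [hB0, add_zero]
    have h2 : volume ((fun x => x + b) '' A) = volume A := by
      rw [Set.image_add_right]; simp
    rw [← h2]
    apply measure_mono
    rintro z ⟨x, hx, rfl⟩
    exact hC _ hx _ hb
  rw [hA.measure_eq_iSup_isCompact, hB.measure_eq_iSup_isCompact]
  refine ENNReal.iSup_add_iSup_le fun K L => ?_
  by_cases hKA : K ⊆ A <;> by_cases hLB : L ⊆ B <;>
  by_cases hK : IsCompact K <;> by_cases hL : IsCompact L <;> simp only [hKA, hLB, hK, hL, iSup_false, bot_eq_zero, zero_add, add_zero, zero_le, iSup_const]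
  · refine (add_le_add (measure_mono (subset_insert a K)) (measure_mono (subset_insert b L))).trans ?_
    apply bm1_compact _ _ (hK.insert a) (hL.insert b) (insert_nonempty _ _) (insert_nonempty _ _)
    intro x hx y hy
    exact hC x (insert_subset ha hKA hx) y (insert_subset hb hLB hy)
  all_goals
    first
    | exact (measure_mono hKA).trans (by
        have h2 : volume ((fun x => x + b) '' A) = volume A := by
          rw [Set.image_add_right]; simp
        rw [← h2]
        apply measure_mono
        rintro z ⟨x, hx, rfl⟩
        exact hC _ hx _ hb)
    | exact (measure_mono hLB).trans (by
        have h2 : volume ((fun x => a + x) '' B) = volume B := by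
          rw [Set.image_add_left]; simp
        rw [← h2]
        apply measure_mono
        rintro z ⟨x, hx, rfl⟩
        exact hC _ ha _ hx)

/-- one-dimensional, normalised. -/
lemma pl1_real (a b : ℝ) (ha : 0 < a) (hb : 0 < b) (hab : a + b = 1) (f g h : ℝ → ℝ)
    (hf : Measurable f) (hg : Measurable g) (hh : Measurable h)
    (hf0 : ∀ x, 0 ≤ f x) (hg0 : ∀ x, 0 ≤ g x) (hh0 : ∀ x, 0 ≤ h x)
    (hf1 : ∀ x, f x ≤ 1) (hg1 : ∀ x, g x ≤ 1)
    (hfs : ∀ u < 1, ∃ x, u < f x) (hgs : ∀ u < 1, ∃ x, u < g x)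
    (H : ∀ x y, f x ^ a * g y ^ b ≤ h (a * x + b * y)) :
    ENNReal.ofReal a * (∫⁻ x, ENNReal.ofReal (f x)) + ENNReal.ofReal b * (∫⁻ x, ENNReal.ofReal (g x))
      ≤ ∫⁻ x, ENNReal.ofReal (h x) := by
  rw [lintegral_eq_lintegral_meas_lt _ (ae_of_all _ hf0) hf.aemeasurable,
    lintegral_eq_lintegral_meas_lt _ (ae_of_all _ hg0) hg.aemeasurable,
    lintegral_eq_lintegral_meas_lt _ (ae_of_all _ hh0) hh.aemeasurable,
    ← lintegral_const_mul' _ _ ENNReal.ofReal_ne_top, ← lintegral_const_mul' _ _ ENNReal.ofReal_ne_top,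
    ← lintegral_add_left]
  · refine setLIntegral_mono' measurableSet_Ioi fun u hu => ?_
    simp only [mem_Ioi] at hu
    by_cases hu1 : u < 1
    · have e1 : ENNReal.ofReal a * volume {x | u < f x} = volume (a • {x | u < f x}) := by
        rw [Measure.addHaar_smul]; simp [abs_of_pos ha]
      have e2 : ENNReal.ofReal b * volume {x | u < g x} = volume (b • {x | u < g x}) := by
        rw [Measure.addHaar_smul]; simp [abs_of_pos hb]
      rw [e1, e2]
      apply bm1
      · exact (measurableSet_lt measurable_const hf).const_smul₀ a
      · exact (measurableSet_lt measurable_const hg).const_smul₀ b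
      · obtain ⟨x, hx⟩ := hfs u hu1
        exact ⟨_, Set.smul_mem_smul_set hx⟩
      · obtain ⟨x, hx⟩ := hgs u hu1
        exact ⟨_, Set.smul_mem_smul_set hx⟩
      · rintro _ ⟨x, hx, rfl⟩ _ ⟨y, hy, rfl⟩
        simp only [mem_ofPred_eq, smul_eq_mul] at *
        refine lt_of_lt_of_le ?_ (H x y)
        calc u = u ^ a * u ^ b := by rw [← Real.rpow_add hu, hab, Real.rpow_one]
          _ < _ := by
            apply mul_lt_mul'' (Real.rpow_lt_rpow hu.le hx ha) (Real.rpow_lt_rpow hu.le hy hb) <;> positivity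
    · have z1 : {x | u < f x} = ∅ := by
        ext x; simp; linarith [hf1 x]
      have z2 : {x | u < g x} = ∅ := by
        ext x; simp; linarith [hg1 x]
      simp [z1, z2]
  · refine Measurable.const_mul (Antitone.measurable ?_) _
    intro s t hst
    exact measure_mono fun x hx => lt_of_le_of_lt hst hx

lemma amgm (a b : ℝ) (ha : 0 < a) (hb : 0 < b) (hab : a + b = 1) (x y : ℝ≥0∞) :
    x ^ a * y ^ b ≤ ENNReal.ofReal a * x + ENNReal.ofReal b * y := by
  have hpq : (a⁻¹).HolderConjugate (b⁻¹) := by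
    rw [Real.holderConjugate_iff]
    refine ⟨(one_lt_inv₀ ha).2 (by linarith), by simpa using hab⟩
  have := ENNReal.young_inequality (x ^ a) (y ^ b) hpq
  rw [← ENNReal.rpow_mul, ← ENNReal.rpow_mul, mul_inv_cancel₀ ha.ne', mul_inv_cancel₀ hb.ne',
    ENNReal.rpow_one, ENNReal.rpow_one, ENNReal.ofReal_inv_of_pos ha, ENNReal.ofReal_inv_of_pos hb,
    div_eq_mul_inv, div_eq_mul_inv, inv_inv, inv_inv, mul_comm x, mul_comm y] at this
  exact this

/-- Prekopa--Leindler property. -/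
def PL (E : Type*) [AddCommGroup E] [Module ℝ E] [MeasureSpace E] (a b : ℝ) : Prop :=
  ∀ f g h : E → ℝ≥0∞, Measurable f → Measurable g → Measurable h →
    (∀ x y, f x ^ a * g y ^ b ≤ h (a • x + b • y)) →
    (∫⁻ x, f x) ^ a * (∫⁻ x, g x) ^ b ≤ ∫⁻ x, h x

lemma sup_aux (f : ℝ → ℝ≥0∞) (S : ℝ≥0∞) (hS : S = ⨆ x, f x) (hS0 : S ≠ 0) (hST : S ≠ ⊤) :
    ∀ u < 1, ∃ x, u < (f x / S).toReal := by
  intro u hu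
  have h1 : ENNReal.ofReal u * S < ⨆ x, f x := by
    rw [← hS]
    calc _ < 1 * S := by
          apply ENNReal.mul_lt_mul_left hS0 hST
          rwa [ENNReal.ofReal_lt_one]
      _ = S := one_mul _
  obtain ⟨x, hx⟩ := lt_iSup_iff.1 h1
  refine ⟨x, ?_⟩
  by_cases hu0 : 0 ≤ u
  · have f1 : f x / S ≤ 1 := ENNReal.div_le_of_le_mul (by simpa [hS] using le_iSup f x)
    rw [← ENNReal.ofReal_lt_iff_lt_toReal hu0 (ne_top_of_le_ne_top ENNReal.one_ne_top f1)]
    rwa [ENNReal.lt_div_iff_mul_lt (Or.inl hS0) (Or.inl hST)]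
  · exact (not_le.1 hu0).trans_le ENNReal.toReal_nonneg

lemma pl1_bdd (a b : ℝ) (ha : 0 < a) (hb : 0 < b) (hab : a + b = 1) (f g h : ℝ → ℝ≥0∞)
    (hf : Measurable f) (hg : Measurable g) (hh : Measurable h)
    (M : ℝ≥0∞) (hM : M ≠ ⊤) (hfM : ∀ x, f x ≤ M) (hgM : ∀ x, g x ≤ M)
    (H : ∀ x y, f x ^ a * g y ^ b ≤ h (a • x + b • y)) :
    (∫⁻ x, f x) ^ a * (∫⁻ x, g x) ^ b ≤ ∫⁻ x, h x := by
  set S := ⨆ x, f x with hS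
  set T := ⨆ x, g x with hT
  have hST : S ≠ ⊤ := ne_top_of_le_ne_top hM (iSup_le hfM)
  have hTT : T ≠ ⊤ := ne_top_of_le_ne_top hM (iSup_le hgM)
  by_cases hS0 : S = 0
  · have : ∀ x, f x = 0 := fun x => le_antisymm (hS0 ▸ le_iSup f x) zero_le
    simp [this, ha]
  by_cases hT0 : T = 0
  · have : ∀ x, g x = 0 := fun x => le_antisymm (hT0 ▸ le_iSup g x) zero_le
    simp [this, hb]
  have hSa0 : S ^ a ≠ 0 := by simp [hS0, hST]
  have hSaT : S ^ a ≠ ⊤ := by simp [hS0, hST]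
  have hTb0 : T ^ b ≠ 0 := by simp [hT0, hTT]
  have hTbT : T ^ b ≠ ⊤ := by simp [hT0, hTT]
  set R := S ^ a * T ^ b with hR
  have hR0 : R ≠ 0 := mul_ne_zero hSa0 hTb0
  have hRT : R ≠ ⊤ := ENNReal.mul_ne_top hSaT hTbT
  have key := pl1_real a b ha hb hab (fun x => (f x / S).toReal) (fun x => (g x / T).toReal)
    (fun x => (min (h x / R) 1).toReal) (by fun_prop) (by fun_prop) (by fun_prop)
    (fun _ => ENNReal.toReal_nonneg) (fun _ => ENNReal.toReal_nonneg)
    (fun _ => ENNReal.toReal_nonneg) ?_ ?_ ?_ ?_ ?_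
  · have f1 : ∀ x, f x / S ≤ 1 := fun x => ENNReal.div_le_of_le_mul (by simpa using le_iSup f x)
    have g1 : ∀ x, g x / T ≤ 1 := fun x => ENNReal.div_le_of_le_mul (by simpa using le_iSup g x)
    simp only [ENNReal.ofReal_toReal (ne_top_of_le_ne_top ENNReal.one_ne_top (f1 _)),
      ENNReal.ofReal_toReal (ne_top_of_le_ne_top ENNReal.one_ne_top (g1 _)),
      ENNReal.ofReal_toReal (ne_top_of_le_ne_top ENNReal.one_ne_top (min_le_right _ _))] at key
    have key2 := (amgm a b ha hb hab _ _).trans key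
    have key3 := key2.trans (lintegral_mono fun x => min_le_left (h x / R) 1)
    simp only [div_eq_mul_inv] at key3
    rw [lintegral_mul_const _ hf, lintegral_mul_const _ hg, lintegral_mul_const _ hh,
      ENNReal.mul_rpow_of_nonneg _ _ ha.le, ENNReal.mul_rpow_of_nonneg _ _ hb.le] at key3
    have e : (∫⁻ x, f x) ^ a * S⁻¹ ^ a * ((∫⁻ x, g x) ^ b * T⁻¹ ^ b) =
        ((∫⁻ x, f x) ^ a * (∫⁻ x, g x) ^ b) * R⁻¹ := by
      rw [hR, ENNReal.mul_inv (Or.inl hSa0) (Or.inl hSaT), ENNReal.inv_rpow, ENNReal.inv_rpow]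
      ring
    rw [e] at key3
    exact (ENNReal.mul_le_mul_iff_left (ENNReal.inv_ne_zero.2 hRT) (ENNReal.inv_ne_top.2 hR0)).1 key3
  · intro x
    refine ENNReal.toReal_le_of_le_ofReal zero_le_one ?_
    simpa using ENNReal.div_le_of_le_mul (by simpa using le_iSup f x)
  · intro x
    refine ENNReal.toReal_le_of_le_ofReal zero_le_one ?_
    simpa using ENNReal.div_le_of_le_mul (by simpa using le_iSup g x)
  · exact sup_aux f S hS hS0 hST
  · exact sup_aux g T hT hT0 hTT
  · intro x y
    have f1 : f x / S ≤ 1 := ENNReal.div_le_of_le_mul (by simpa using le_iSup f x)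
    have g1 : g y / T ≤ 1 := ENNReal.div_le_of_le_mul (by simpa using le_iSup g y)
    rw [ENNReal.toReal_rpow, ENNReal.toReal_rpow, ← ENNReal.toReal_mul]
    refine ENNReal.toReal_mono (ne_top_of_le_ne_top ENNReal.one_ne_top (min_le_right _ _)) ?_
    refine le_min ?_ (mul_le_one' (ENNReal.rpow_le_one f1 ha.le) (ENNReal.rpow_le_one g1 hb.le))
    have e : (f x / S) ^ a * (g y / T) ^ b = (f x ^ a * g y ^ b) * R⁻¹ := by
      rw [hR, ENNReal.mul_inv (Or.inl hSa0) (Or.inl hSaT), div_eq_mul_inv, div_eq_mul_inv,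
        ENNReal.mul_rpow_of_nonneg _ _ ha.le, ENNReal.mul_rpow_of_nonneg _ _ hb.le,
        ENNReal.inv_rpow, ENNReal.inv_rpow]
      ring
    rw [e, div_eq_mul_inv]
    gcongr
    exact H x y

lemma trunc_lim {E : Type*} [MeasureSpace E] (f : E → ℝ≥0∞) (hf : Measurable f) :
    ∫⁻ x, f x = ⨆ N : ℕ, ∫⁻ x, min (f x) N := by
  rw [← lintegral_iSup (fun N => hf.min measurable_const)]
  · congr 1; ext x
    rw [← inf_iSup_eq, ENNReal.iSup_natCast, inf_top_eq]
  · intro N M h x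
    simp only
    gcongr

lemma iSup_rpow_aux (a : ℝ) (ha : 0 < a) (u : ℕ → ℝ≥0∞) : (⨆ N, u N) ^ a = ⨆ N, (u N) ^ a := by
  have := (ENNReal.orderIsoRpow a ha).map_iSup u
  simpa only [ENNReal.orderIsoRpow_apply] using this

lemma pl1 (a b : ℝ) (ha : 0 < a) (hb : 0 < b) (hab : a + b = 1) : PL ℝ a b := by
  intro f g h hf hg hh H
  rw [trunc_lim f hf, trunc_lim g hg, iSup_rpow_aux a ha, iSup_rpow_aux b hb, ENNReal.iSup_mul]
  refine iSup_le fun N => ?_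
  rw [ENNReal.mul_iSup]
  refine iSup_le fun M => ?_
  refine pl1_bdd a b ha hb hab _ _ h (hf.min measurable_const) (hg.min measurable_const) hh
    (max N M) (by simp) (fun x => (min_le_right _ _).trans (le_max_left _ _))
    (fun x => (min_le_right _ _).trans (le_max_right _ _)) ?_
  intro x y
  refine le_trans ?_ (H x y)
  gcongr <;> exact min_le_left _ _

lemma pl_prod {E F : Type*} [AddCommGroup E] [Module ℝ E] [MeasureSpace E] [AddCommGroup F]
    [Module ℝ F] [MeasureSpace F] [SFinite (volume : Measure F)]
    (a b : ℝ) (hE : PL E a b) (hF : PL F a b) : PL (E × F) a b := by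
  intro f g h hf hg hh H
  rw [Measure.volume_eq_prod, lintegral_prod _ hf.aemeasurable, lintegral_prod _ hg.aemeasurable,
    lintegral_prod _ hh.aemeasurable]
  refine hE _ _ _ hf.lintegral_prod_right' hg.lintegral_prod_right' hh.lintegral_prod_right' ?_
  intro x y
  refine hF _ _ _ (by fun_prop) (by fun_prop) (by fun_prop) ?_
  intro z w
  exact H (x, z) (y, w)

lemma pl_equiv {E F : Type*} [AddCommGroup E] [Module ℝ E] [MeasureSpace E] [AddCommGroup F]
    [Module ℝ F] [MeasureSpace F] (a b : ℝ) (e : E ≃ᵐ F) (he : MeasurePreserving e volume volume)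
    (hl : ∀ x y, e (a • x + b • y) = a • e x + b • e y) (hF : PL F a b) : PL E a b := by
  intro f g h hf hg hh H
  have he' := he.symm
  rw [← he'.lintegral_comp hf, ← he'.lintegral_comp hg, ← he'.lintegral_comp hh]
  refine hF _ _ _ (hf.comp e.symm.measurable) (hg.comp e.symm.measurable)
    (hh.comp e.symm.measurable) ?_
  intro x y
  have : e.symm (a • x + b • y) = a • e.symm x + b • e.symm y := by
    rw [MeasurableEquiv.symm_apply_eq, hl]; simp
  simp only [this]
  exact H _ _

lemma pl_pi (a b : ℝ) (ha : 0 < a) (hb : 0 < b) (hab : a + b = 1) (n : ℕ) :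
    PL (Fin n → ℝ) a b := by
  induction n with
  | zero =>
    intro f g h hf hg hh H
    have hv : (volume : Measure (Fin 0 → ℝ)) = Measure.dirac default := by
      rw [volume_pi, Measure.pi_of_empty _ default]
    rw [hv, lintegral_dirac' _ hf, lintegral_dirac' _ hg, lintegral_dirac' _ hh]
    convert H default default using 2
  | succ n ih =>
    refine pl_equiv a b (MeasurableEquiv.piFinSuccAbove (fun _ => ℝ) 0)
      (volume_preserving_piFinSuccAbove (fun _ => ℝ) 0) ?_ (pl_prod a b (pl1 a b ha hb hab) ih)
    intro x y
    ext i <;> simp [MeasurableEquiv.piFinSuccAbove, Fin.tail]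

lemma pl_euc (a b : ℝ) (ha : 0 < a) (hb : 0 < b) (hab : a + b = 1) (n : ℕ) :
    PL (EuclideanSpace ℝ (Fin n)) a b := by
  refine pl_equiv a b _ (EuclideanSpace.volume_preserving_symm_measurableEquiv_toLp (Fin n)) ?_
    (pl_pi a b ha hb hab n)
  intro x y
  ext i; simp

lemma bm_euc (n : ℕ) (A B C : Set (EuclideanSpace ℝ (Fin n))) (hA : MeasurableSet A)
    (hB : MeasurableSet B) (hC : MeasurableSet C) (H : ∀ x ∈ A, ∀ y ∈ B, x + y ∈ C)
    (α β : ℝ) (hα : 0 < α) (hβ : 0 < β) (vA : volume A = ENNReal.ofReal (α ^ n))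
    (vB : volume B = ENNReal.ofReal (β ^ n)) : ENNReal.ofReal ((α + β) ^ n) ≤ volume C := by
  have hs : 0 < α + β := by positivity
  set a := α / (α + β) with ha'
  set b := β / (α + β) with hb'
  have ha : 0 < a := by positivity
  have hb : 0 < b := by positivity
  have hab : a + b = 1 := by rw [ha', hb']; field_simp
  have mA : MeasurableSet (a⁻¹ • A) := hA.const_smul₀ _
  have mB : MeasurableSet (b⁻¹ • B) := hB.const_smul₀ _
  have key := pl_euc a b ha hb hab n ((a⁻¹ • A).indicator 1) ((b⁻¹ • B).indicator 1) (C.indicator 1)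
    (measurable_one.indicator mA) (measurable_one.indicator mB) (measurable_one.indicator hC) ?_
  · rw [lintegral_indicator_one mA, lintegral_indicator_one mB, lintegral_indicator_one hC,
      Measure.addHaar_smul, Measure.addHaar_smul, vA, vB, finrank_euclideanSpace, Fintype.card_fin,
      ← ENNReal.ofReal_mul (abs_nonneg _), ← ENNReal.ofReal_mul (abs_nonneg _),
      abs_of_pos (by positivity), abs_of_pos (by positivity), ← mul_pow, ← mul_pow] at key
    have e1 : a⁻¹ * α = α + β := by rw [ha']; field_simp
    have e2 : b⁻¹ * β = α + β := by rw [hb']; field_simp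
    rw [e1, e2, ← ENNReal.rpow_add_of_nonneg _ _ ha.le hb.le, hab, ENNReal.rpow_one] at key
    exact key
  · intro x y
    by_cases hx : x ∈ a⁻¹ • A
    · by_cases hy : y ∈ b⁻¹ • B
      · have : a • x + b • y ∈ C := by
          apply H
          · rwa [mem_inv_smul_set_iff₀ ha.ne'] at hx
          · rwa [mem_inv_smul_set_iff₀ hb.ne'] at hy
        simp [hx, hy, this]
      · simp [hy, hb]
    · simp [hx, ha]

lemma iso_euc (n : ℕ) (hn : 1 < n) (A : Set (EuclideanSpace ℝ (Fin n))) (hA : MeasurableSet A)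
    (hfin : volume A ≠ ⊤) (h : ℝ) (hh : 0 < h) :
    volume A + ENNReal.ofReal (h * ((n:ℝ) *
      (volume (Metric.ball (0 : EuclideanSpace ℝ (Fin n)) 1)).toReal ^ ((1:ℝ) / (n:ℝ)))) *
      volume A ^ (1 - 1 / (n:ℝ)) ≤ volume (Metric.thickening h A) := by
  have hn0 : (0:ℝ) < n := by positivity
  have hn1 : (1:ℝ) < n := by exact_mod_cast hn
  have hp : 0 < 1 - 1 / (n:ℝ) := by
    rw [sub_pos, div_lt_one hn0]; exact hn1
  by_cases h0 : volume A = 0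
  · rw [h0, ENNReal.zero_rpow_of_pos hp]; simp
  set v := (volume A).toReal with hv
  have hv0 : 0 < v := ENNReal.toReal_pos h0 hfin
  have hvA : volume A = ENNReal.ofReal v := (ENNReal.ofReal_toReal hfin).symm
  set w := (volume (Metric.ball (0 : EuclideanSpace ℝ (Fin n)) 1)).toReal with hw
  have hw0 : 0 < w := ENNReal.toReal_pos (Metric.measure_ball_pos _ _ one_pos).ne'
    measure_ball_lt_top.ne
  have rn : ∀ z : ℝ, 0 ≤ z → (z ^ ((1:ℝ) / (n:ℝ))) ^ n = z := by
    intro z hz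
    rw [one_div]
    exact Real.rpow_inv_natCast_pow hz (by lia)
  have key := bm_euc n A (Metric.ball 0 h) (Metric.thickening h A) hA measurableSet_ball
    Metric.isOpen_thickening.measurableSet ?_ (v ^ ((1:ℝ) / (n:ℝ))) (h * w ^ ((1:ℝ) / (n:ℝ)))
    (by positivity) (by positivity) (by rw [rn _ hv0.le, hvA]) ?_
  · refine le_trans ?_ key
    have := pow_add_mul_le_add_pow (a := v ^ ((1:ℝ) / (n:ℝ))) (b := h * w ^ ((1:ℝ) / (n:ℝ)))
      (by positivity) (by positivity) n
    rw [hvA, ENNReal.ofReal_rpow_of_pos hv0, ← ENNReal.ofReal_mul (by positivity),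
      ← ENNReal.ofReal_add (by positivity) (by positivity)]
    refine ENNReal.ofReal_le_ofReal (le_trans (le_of_eq ?_) this)
    rw [rn _ hv0.le]
    have : (v ^ ((1:ℝ) / (n:ℝ))) ^ (n - 1) = v ^ (1 - 1 / (n:ℝ)) := by
      rw [← Real.rpow_natCast, ← Real.rpow_mul hv0.le, Nat.cast_sub hn.le]
      congr 1
      field_simp
      simp
    rw [this]; ring
  · intro x hx y hy
    rw [← add_ball_zero]
    exact Set.add_mem_add hx hy
  · rw [Measure.addHaar_ball_of_pos _ _ hh, finrank_euclideanSpace, Fintype.card_fin, mul_pow, rn _ hw0.le,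
      ENNReal.ofReal_mul (by positivity), hw, ENNReal.ofReal_toReal measure_ball_lt_top.ne]

/-- The rearrangement side. -/
lemma lorentz_le {α : Type*} [MeasurableSpace α] (μ : Measure α) (f : α → ℝ) (p : ℝ) (hp : 0 < p)
    (hfin : ∀ s > 0, μ {x | s < |f x|} ≠ ⊤) :
    ∫⁻ t in Ioi (0:ℝ), ENNReal.ofReal (t ^ (p - 1) * rearr μ f t) ≤
      ENNReal.ofReal p⁻¹ * ∫⁻ s in Ioi (0:ℝ), μ {x | s < |f x|} ^ p := by
  have hanti : ∀ s > 0, ∀ t, s ≤ t → distrib μ f t ≤ distrib μ f s := by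
    intro s hs t hst
    exact ENNReal.toReal_mono (hfin s hs) (measure_mono fun x hx => lt_of_le_of_lt hst hx)
  set D : ℝ → ℝ≥0∞ := fun s => μ {x | s < |f x|} with hD
  have hDm : Measurable D := by
    refine Antitone.measurable ?_
    intro s t hst
    exact measure_mono fun x hx => lt_of_le_of_lt hst hx
  have step1 : ∀ t ∈ Ioi (0:ℝ), ENNReal.ofReal (t ^ (p - 1) * rearr μ f t) ≤
      ∫⁻ s in Ioi (0:ℝ), (if ENNReal.ofReal t < D s then ENNReal.ofReal (t ^ (p - 1)) else 0) := by
    intro t ht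
    have ht0 : (0:ℝ) < t := ht
    calc ENNReal.ofReal (t ^ (p - 1) * rearr μ f t)
        = ∫⁻ s in Ioo (0:ℝ) (rearr μ f t), ENNReal.ofReal (t ^ (p - 1)) := by
          rw [setLIntegral_const, Real.volume_Ioo, sub_zero, ENNReal.ofReal_mul (by positivity)]
      _ ≤ ∫⁻ s in Ioo (0:ℝ) (rearr μ f t),
            (if ENNReal.ofReal t < D s then ENNReal.ofReal (t ^ (p - 1)) else 0) := by
          refine setLIntegral_mono' measurableSet_Ioo fun s hs => ?_
          rw [if_pos]
          by_contra hcon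
          rw [not_lt] at hcon
          have : rearr μ f t ≤ s := by
            refine csInf_le ⟨0, fun z hz => hz.1⟩ ⟨hs.1.le, ?_⟩
            exact ENNReal.toReal_le_of_le_ofReal ht0.le hcon
          exact absurd hs.2 (not_lt.2 this)
      _ ≤ _ := lintegral_mono_set Ioo_subset_Ioi_self
  refine (setLIntegral_mono' measurableSet_Ioi step1).trans ?_
  rw [lintegral_lintegral_swap]
  · rw [← lintegral_const_mul' _ _ ENNReal.ofReal_ne_top]
    refine setLIntegral_mono' measurableSet_Ioi fun s hs => ?_
    have hs' : D s = ENNReal.ofReal (D s).toReal := (ENNReal.ofReal_toReal (hfin s hs)).symm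
    set d := (D s).toReal with hd
    have hd0 : 0 ≤ d := ENNReal.toReal_nonneg
    have : ∀ t ∈ Ioi (0:ℝ), (if ENNReal.ofReal t < D s then ENNReal.ofReal (t ^ (p - 1)) else 0) ≤
        (Ioc 0 d).indicator (fun t => ENNReal.ofReal (t ^ (p - 1))) t := by
      intro t ht
      split_ifs with h
      · rw [indicator_of_mem]
        refine ⟨ht, ?_⟩
        rw [hs'] at h
        exact ((ENNReal.ofReal_lt_ofReal_iff_of_nonneg (le_of_lt ht)).1 h).le
      · exact zero_le
    refine (setLIntegral_mono' measurableSet_Ioi this).trans ?_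
    change _ ≤ _ * D s ^ p
    rw [lintegral_indicator measurableSet_Ioc, Measure.restrict_restrict measurableSet_Ioc,
      inter_eq_left.2 Ioc_subset_Ioi_self, ← ofReal_integral_eq_lintegral_ofReal,
      ← intervalIntegral.integral_of_le hd0, integral_rpow (Or.inl (by linarith)), hs',
      ENNReal.ofReal_rpow_of_nonneg hd0 hp.le, ← ENNReal.ofReal_mul (by positivity)]
    · apply ENNReal.ofReal_le_ofReal
      rw [sub_add_cancel, Real.zero_rpow hp.ne', sub_zero, div_eq_inv_mul]
    · have := intervalIntegral.intervalIntegrable_rpow' (a := 0) (b := d) (r := p - 1) (by linarith)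
      rwa [intervalIntegrable_iff_integrableOn_Ioc_of_le hd0] at this
    · refine (ae_restrict_iff' measurableSet_Ioc).2 (ae_of_all _ fun t ht => ?_)
      exact Real.rpow_nonneg ht.1.le _
  · refine Measurable.aemeasurable ?_
    refine Measurable.ite (measurableSet_lt ?_ ?_) ?_ measurable_const
    · exact measurable_fst.ennreal_ofReal
    · exact hDm.comp measurable_snd
    · exact (measurable_fst.pow_const _).ennreal_ofReal

lemma sob_main (n : ℕ) (hn : 1 < n) (f : EuclideanSpace ℝ (Fin n) → ℝ)
    (K : ℝ≥0) (hK : LipschitzWith K f) (hfsupp : HasCompactSupport f) :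
    ENNReal.ofReal ((n:ℝ) *
      (volume (Metric.ball (0 : EuclideanSpace ℝ (Fin n)) 1)).toReal ^ ((1:ℝ) / (n:ℝ))) *
      (∫⁻ s in Ioi (0:ℝ), volume {x | s < |f x|} ^ (1 - 1 / (n:ℝ))) ≤
    ENNReal.ofReal (∫ x, ‖fderiv ℝ f x‖) := by
  set τ := (n:ℝ) *
      (volume (Metric.ball (0 : EuclideanSpace ℝ (Fin n)) 1)).toReal ^ ((1:ℝ) / (n:ℝ)) with hτ
  have hτ0 : 0 ≤ τ := by positivity
  set J := ∫⁻ s in Ioi (0:ℝ), volume {x | s < |f x|} ^ (1 - 1 / (n:ℝ)) with hJ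
  have hfc : Continuous f := hK.continuous
  have hgc : Continuous fun x => |f x| := hfc.abs
  have hopen : ∀ s : ℝ, IsOpen {x | s < |f x|} := fun s => isOpen_lt continuous_const hgc
  have hfin : ∀ s > 0, volume {x | s < |f x|} ≠ ⊤ := by
    intro s hs
    refine ne_top_of_le_ne_top hfsupp.measure_lt_top.ne (measure_mono fun x hx => ?_)
    apply subset_tsupport
    have : s < |f x| := hx
    intro h0
    rw [h0] at this
    simp at this
    linarith
  obtain ⟨M, hM⟩ := hfsupp.exists_bound_of_continuous hfc
  set u : ℝ → EuclideanSpace ℝ (Fin n) → ℝ := fun h x => sSup ((fun y => |f y|) '' Metric.ball x h)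
    with hu
  have hbdd : ∀ h x, BddAbove ((fun y => |f y|) '' Metric.ball x h) := by
    intro h x
    refine ⟨M, ?_⟩
    rintro _ ⟨y, -, rfl⟩
    exact hM y
  have hne : ∀ h > 0, ∀ x, ((fun y => |f y|) '' Metric.ball x h).Nonempty := by
    intro h hh x
    exact ⟨_, ⟨x, Metric.mem_ball_self hh, rfl⟩⟩
  have hug : ∀ h > 0, ∀ x, |f x| ≤ u h x := fun h hh x =>
    le_csSup (hbdd h x) ⟨x, Metric.mem_ball_self hh, rfl⟩
  have hset : ∀ h > 0, ∀ s, {x | s < u h x} = Metric.thickening h {x | s < |f x|} := by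
    intro h hh s
    ext x
    simp only [mem_ofPred_eq, hu, lt_csSup_iff (hbdd h x) (hne h hh x), Metric.mem_thickening_iff]
    constructor
    · rintro ⟨_, ⟨y, hy, rfl⟩, hs⟩
      exact ⟨y, hs, by rw [dist_comm]; exact hy⟩
    · rintro ⟨y, hs, hy⟩
      exact ⟨_, ⟨y, by rw [Metric.mem_ball, dist_comm]; exact hy, rfl⟩, hs⟩
  have hum : ∀ h > 0, Measurable (u h) := by
    intro h hh
    refine measurable_of_Ioi fun s => ?_
    change MeasurableSet {x | s < u h x}
    rw [hset h hh]
    exact Metric.isOpen_thickening.measurableSet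
  have hgint : ∫⁻ x, ENNReal.ofReal |f x| ≠ ⊤ := by
    have : Integrable (fun x => |f x|) := (hfc.integrable_of_hasCompactSupport hfsupp).abs
    exact this.lintegral_lt_top.ne
  have hmain : ∀ h > 0, ENNReal.ofReal τ * J ≤ ∫⁻ x, ENNReal.ofReal ((u h x - |f x|) / h) := by
    intro h hh
    have e1 : (∫⁻ x, ENNReal.ofReal |f x|) + ENNReal.ofReal (h * τ) * J ≤
        ∫⁻ x, ENNReal.ofReal (u h x) := by
      rw [lintegral_eq_lintegral_meas_lt _ (ae_of_all _ fun x => abs_nonneg _) hgc.aemeasurable,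
        lintegral_eq_lintegral_meas_lt _ (ae_of_all _ fun x => (abs_nonneg _).trans (hug h hh x))
          (hum h hh).aemeasurable, hJ, ← lintegral_const_mul' _ _ ENNReal.ofReal_ne_top,
        ← lintegral_add_left]
      · refine setLIntegral_mono' measurableSet_Ioi fun s hs => ?_
        rw [hset h hh]
        exact iso_euc n hn _ (hopen s).measurableSet (hfin s hs) h hh
      · refine Antitone.measurable ?_
        intro s t hst
        exact measure_mono fun x hx => lt_of_le_of_lt hst hx
    have e2 : ∫⁻ x, ENNReal.ofReal (u h x) = (∫⁻ x, ENNReal.ofReal |f x|) +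
        ENNReal.ofReal h * ∫⁻ x, ENNReal.ofReal ((u h x - |f x|) / h) := by
      rw [← lintegral_const_mul' _ _ ENNReal.ofReal_ne_top, ← lintegral_add_left]
      · congr 1; ext x
        rw [← ENNReal.ofReal_mul hh.le, ← ENNReal.ofReal_add (abs_nonneg _)]
        · congr 1; field_simp; ring
        · have := hug h hh x
          rw [mul_div_cancel₀ _ hh.ne']; linarith
      · exact hgc.measurable.ennreal_ofReal
    rw [e2] at e1
    have e3 := (ENNReal.add_le_add_iff_left hgint).1 e1
    rw [ENNReal.ofReal_mul hh.le, mul_assoc] at e3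
    exact (ENNReal.mul_le_mul_iff_right (by simpa using hh) ENNReal.ofReal_ne_top).1 e3
  -- integrability of the gradient
  have hdint : Integrable (fun x => ‖fderiv ℝ f x‖) := by
    have hcs : HasCompactSupport (fderiv ℝ f) := hfsupp.fderiv (𝕜 := ℝ)
    have h1 : Integrable ((tsupport (fderiv ℝ f)).indicator fun _ => (K:ℝ)) := by
      rw [integrable_indicator_iff (isClosed_tsupport _).measurableSet]
      exact integrableOn_const hcs.measure_lt_top.ne
    refine (h1.mono' (measurable_fderiv ℝ f).aestronglyMeasurable (ae_of_all _ fun x => ?_)).norm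
    by_cases hx : x ∈ tsupport (fderiv ℝ f)
    · rw [indicator_of_mem hx]
      exact norm_fderiv_le_of_lipschitz ℝ hK
    · rw [indicator_of_notMem hx, image_eq_zero_of_notMem_tsupport hx, norm_zero]
  rw [ofReal_integral_eq_lintegral_ofReal hdint (ae_of_all _ fun x => norm_nonneg _)]
  set e : ℕ → ℝ := fun k => 1 / ((k:ℝ) + 1) with he
  have he0 : ∀ k, 0 < e k := fun k => by positivity
  have he1 : ∀ k, e k ≤ 1 := fun k => by
    rw [he]; simp only; rw [div_le_one (by positivity)]; linarith [(Nat.cast_nonneg k : (0:ℝ) ≤ k)]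
  have het : Tendsto e atTop (𝓝 0) := tendsto_one_div_add_atTop_nhds_zero_nat
  have fatou := limsup_lintegral_le (μ := (volume : Measure (EuclideanSpace ℝ (Fin n))))
    (f := fun k x => ENNReal.ofReal ((u (e k) x - |f x|) / e k))
    ((Metric.cthickening 1 (tsupport f)).indicator fun _ => ENNReal.ofReal K) ?_ ?_ ?_
  · calc ENNReal.ofReal τ * J
        ≤ limsup (fun k => ∫⁻ x, ENNReal.ofReal ((u (e k) x - |f x|) / e k)) atTop := by
          refine le_limsup_of_frequently_le ?_ (by isBoundedDefault)
          exact Frequently.of_forall fun k => hmain (e k) (he0 k)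
      _ ≤ _ := fatou
      _ ≤ _ := by
        refine lintegral_mono_ae ?_
        filter_upwards [hK.ae_differentiableAt] with x hx
        refine ENNReal.le_of_forall_pos_le_add fun ε hε _ => ?_
        have hε' : (0:ℝ) < ε := hε
        have hd := hx.hasFDerivAt.isLittleO.def hε'
        obtain ⟨δ, hδ, hball⟩ := Metric.eventually_nhds_iff.1 hd
        refine limsup_le_of_le (by isBoundedDefault) ?_
        filter_upwards [het.eventually (gt_mem_nhds hδ)] with k hk
        rw [← ENNReal.ofReal_coe_nnreal, ← ENNReal.ofReal_add (norm_nonneg _) hε'.le]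
        apply ENNReal.ofReal_le_ofReal
        rw [div_le_iff₀ (he0 k), sub_le_iff_le_add]
        refine csSup_le (hne _ (he0 k) x) ?_
        rintro _ ⟨y, hy, rfl⟩
        have hyx : ‖y - x‖ < e k := by rw [← dist_eq_norm]; exact hy
        have b1 := hball (y := y) (hy.trans hk)
        have b2 := (fderiv ℝ f x).le_opNorm (y - x)
        have b3 : |f y| - |f x| ≤ ‖f y - f x‖ := abs_sub_abs_le_abs_sub _ _
        have b4 : ‖f y - f x‖ ≤ ‖f y - f x - fderiv ℝ f x (y - x)‖ + ‖fderiv ℝ f x (y - x)‖ := by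
          have := norm_add_le (f y - f x - fderiv ℝ f x (y - x)) (fderiv ℝ f x (y - x))
          simpa using this
        have b5 : (‖fderiv ℝ f x‖ + ε) * ‖y - x‖ ≤ (‖fderiv ℝ f x‖ + ε) * e k := by
          gcongr
        simp only
        linarith
  · intro k
    exact (((hum _ (he0 k)).sub hgc.measurable).div_const _).ennreal_ofReal
  · intro k
    refine ae_of_all _ fun x => ?_
    simp only
    by_cases hx : x ∈ Metric.cthickening 1 (tsupport f)
    · rw [indicator_of_mem hx]
      apply ENNReal.ofReal_le_ofReal
      rw [div_le_iff₀ (he0 k), sub_le_iff_le_add]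
      refine csSup_le (hne _ (he0 k) x) ?_
      rintro _ ⟨y, hy, rfl⟩
      have hyx : dist y x < e k := hy
      have b1 := hK.dist_le_mul y x
      have b3 : |f y| - |f x| ≤ dist (f y) (f x) := abs_sub_abs_le_abs_sub _ _
      have b5 : (K:ℝ) * dist y x ≤ K * e k := by gcongr
      simp only
      linarith
    · rw [indicator_of_notMem hx]
      have : u (e k) x ≤ 0 := by
        refine csSup_le (hne _ (he0 k) x) ?_
        rintro _ ⟨y, hy, rfl⟩
        have hyx : dist y x < e k := hy
        have : f y = 0 := by
          apply image_eq_zero_of_notMem_tsupport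
          intro hys
          apply hx
          refine Metric.mem_cthickening_of_dist_le x y 1 _ hys ?_
          rw [dist_comm]
          exact hyx.le.trans (he1 k)
        simp [this]
      rw [ENNReal.ofReal_of_nonpos]
      have := abs_nonneg (f x)
      exact div_nonpos_of_nonpos_of_nonneg (by linarith) (he0 k).le
  · rw [lintegral_indicator Metric.isClosed_cthickening.measurableSet, setLIntegral_const]
    exact ENNReal.mul_ne_top ENNReal.ofReal_ne_top (hfsupp.cthickening).measure_lt_top.ne

/-- The sharp Gagliardo–Nirenberg inequality: for `n > 1`,
`n' = n/(n-1)`, `τₙ = n βₙ^{1/n}` (`βₙ` the volume of the unit ball),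
`∫₀^∞ t^{1/n' - 1} f*(t) dt ≤ n' τₙ⁻¹ ∫ |∇f| dx` for every `f ∈ Lip₀(ℝⁿ)`. -/
theorem sharp_gagliardo_nirenberg
    (n : ℕ) (hn : 1 < n) (f : EuclideanSpace ℝ (Fin n) → ℝ)
    (hfLip : ∃ K, LipschitzWith K f) (hfsupp : HasCompactSupport f) :
    ∫⁻ t in Ioi (0:ℝ),
        ENNReal.ofReal (t ^ ((1:ℝ) / ((n:ℝ) / ((n:ℝ) - 1)) - 1) * rearr volume f t) ≤
      ENNReal.ofReal (((n:ℝ) / ((n:ℝ) - 1)) *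
        ((n:ℝ) * (volume (Metric.ball (0 : EuclideanSpace ℝ (Fin n)) 1)).toReal ^
          ((1:ℝ) / (n:ℝ)))⁻¹ * ∫ x, ‖fderiv ℝ f x‖) := by

  obtain ⟨K, hK⟩ := hfLip
  have hn0 : (0:ℝ) < n := by positivity
  have hn1 : (1:ℝ) < n := by exact_mod_cast hn
  have hp : (1:ℝ) / ((n:ℝ) / ((n:ℝ) - 1)) = 1 - 1 / (n:ℝ) := by
    have : (n:ℝ) - 1 ≠ 0 := by linarith
    field_simp
  have hpp : 0 < 1 - 1 / (n:ℝ) := by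
    rw [sub_pos, div_lt_one hn0]; exact hn1
  have hpi : ((n:ℝ) / ((n:ℝ) - 1)) = (1 - 1 / (n:ℝ))⁻¹ := by rw [← hp, one_div, inv_inv]
  have hfin : ∀ s > 0, volume {x | s < |f x|} ≠ ⊤ := by
    intro s hs
    refine ne_top_of_le_ne_top hfsupp.measure_lt_top.ne (measure_mono fun x hx => ?_)
    apply subset_tsupport
    have : s < |f x| := hx
    intro h0
    rw [h0] at this
    simp at this
    linarith
  have h1 := lorentz_le volume f (1 - 1 / (n:ℝ)) hpp hfin
  have h2 := sob_main n hn f K hK hfsupp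
  have hw0 : 0 < (volume (Metric.ball (0 : EuclideanSpace ℝ (Fin n)) 1)).toReal :=
    ENNReal.toReal_pos (Metric.measure_ball_pos _ _ one_pos).ne' measure_ball_lt_top.ne
  rw [hp, hpi]
  refine h1.trans ?_
  set τ := (n:ℝ) *
      (volume (Metric.ball (0 : EuclideanSpace ℝ (Fin n)) 1)).toReal ^ ((1:ℝ) / (n:ℝ)) with hτ
  have hτ0 : 0 < τ := by positivity
  rw [mul_assoc, ENNReal.ofReal_mul (by positivity), ENNReal.ofReal_mul (by positivity),
    ENNReal.ofReal_inv_of_pos hτ0]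
  gcongr
  rw [mul_comm _⁻¹, ← div_eq_mul_inv, ENNReal.le_div_iff_mul_le (Or.inl (by simpa using hτ0))
    (Or.inl ENNReal.ofReal_ne_top), mul_comm]
  exact h2
end
end

section
/- Let n > 1. There exists a constant C = C(n) such that for every f ∈ Lip₀(ℝⁿ) and every t > 0: f**(t) − f*(t) ≤ C·t^{1/n}·|∇f|**(t), where |∇f|**(t) = (1/t)∫₀ᵗ |∇f|*(s)ds. -/
open MeasureTheory Set Filter Topology
open scoped ENNReal NNReal

noncomputable section

theorem osc_oneD {K : ℝ≥0} {φ : ℝ → ℝ} (hφ : LipschitzWith K φ) (hc : HasCompactSupport φ)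
    (s : ℝ) : ‖φ s‖ₑ ≤ ∫⁻ y, ‖deriv φ y‖ₑ := by
  obtain ⟨R, hR⟩ := hc.isCompact.isBounded.subset_closedBall 0
  set a := min (s - 1) (-(|R| + 1)) with ha
  have has : a ≤ s := (min_le_left _ _).trans (by linarith)
  have h0 : φ a = 0 := by
    apply image_eq_zero_of_notMem_tsupport
    intro hmem
    have h1 := hR hmem
    rw [mem_closedBall_zero_iff, Real.norm_eq_abs] at h1
    have h2 : a ≤ -(|R| + 1) := min_le_right _ _
    have h3 := neg_abs_le a
    have h4 := le_abs_self R
    linarith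
  have hac : AbsolutelyContinuousOnInterval φ a s :=
    (hφ.lipschitzOnWith (s := uIcc a s)).absolutelyContinuousOnInterval
  have := hac.integral_deriv_eq_sub
  rw [h0, sub_zero] at this
  rw [← this, intervalIntegral.integral_of_le has]
  exact (enorm_integral_le_lintegral_enorm _).trans (setLIntegral_le_lintegral _ _)

theorem osc_gns_pi {n : ℕ} {p : ℝ} (hp : Real.HolderConjugate (n : ℝ) p) {K : ℝ≥0}
    {v : (Fin n → ℝ) → ℝ} (hv : LipschitzWith K v) (hc : HasCompactSupport v) :
    ∫⁻ x, ‖v x‖ₑ ^ p ≤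
      (∫⁻ x, ∑ i, ‖lineDeriv ℝ v x (Pi.single i (1:ℝ))‖ₑ) ^ p := by
  have h1n : (1:ℝ) < n := hp.lt
  have hmeas : Measurable fun x => ∑ i, ‖lineDeriv ℝ v x (Pi.single i (1:ℝ))‖ₑ :=
    Finset.measurable_sum _ fun i _ => (measurable_lineDeriv hv.continuous).enorm
  have key := lintegral_prod_lintegral_pow_le (ι := Fin n) (A := fun _ => ℝ)
    (fun _ => (volume : Measure ℝ)) (p := p) (by simpa using hp) hmeas
  simp only [Fintype.card_fin] at key
  refine le_trans ?_ key
  rw [← volume_pi]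
  refine lintegral_mono fun x => ?_
  have hb : ∀ i, ‖v x‖ₑ ≤ ∫⁻ y, ∑ j, ‖lineDeriv ℝ v (Function.update x i y)
      (Pi.single j (1:ℝ))‖ₑ := by
    intro i
    have hl : LipschitzWith (K * 1) (fun y => v (Function.update x i y)) := by
      refine hv.comp (LipschitzWith.of_dist_le_mul fun y z => ?_)
      rw [NNReal.coe_one, one_mul, dist_pi_le_iff dist_nonneg]
      intro j
      by_cases hj : j = i
      · subst hj; simp
      · simp [hj]
    have h := osc_oneD hl (hc.comp_isClosedEmbedding (isClosedEmbedding_update x i)) (x i)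
    simp only [Function.update_eq_self] at h
    refine h.trans (lintegral_mono fun y => ?_)
    have : deriv (fun y => v (Function.update x i y)) y =
        lineDeriv ℝ v (Function.update x i y) (Pi.single i (1:ℝ)) := by
      unfold lineDeriv
      have e : (fun t : ℝ => v (Function.update x i y + t • Pi.single i (1:ℝ))) =
          fun t => (fun y => v (Function.update x i y)) (y + t) := by
        funext t
        show v _ = v _
        congr 1
        funext j
        by_cases hj : j = i
        · subst hj; simp
        · simp [hj]
      rw [e, deriv_comp_const_add (fun y => v (Function.update x i y)) y 0, add_zero]
    rw [this]
    exact Finset.single_le_sum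
      (f := fun j => ‖lineDeriv ℝ v (Function.update x i y) (Pi.single j (1:ℝ))‖ₑ)
      (fun _ _ => zero_le) (Finset.mem_univ i)
  calc ‖v x‖ₑ ^ p = ∏ _i : Fin n, ‖v x‖ₑ ^ (1 / ((n:ℝ) - 1)) := by
        rw [Finset.prod_const, Finset.card_univ, Fintype.card_fin, ← ENNReal.rpow_natCast,
          ← ENNReal.rpow_mul, hp.conjugate_eq]
        congr 1
        field_simp
    _ ≤ _ := by
        apply Finset.prod_le_prod' 
        intro i _
        have : 0 ≤ 1 / ((n:ℝ) - 1) := by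
          have : 0 < (n:ℝ) - 1 := by linarith
          positivity
        exact ENNReal.rpow_le_rpow (hb i) this

theorem osc_gns {n : ℕ} {p : ℝ} (hp : Real.HolderConjugate (n : ℝ) p) {K : ℝ≥0}
    {u : EuclideanSpace ℝ (Fin n) → ℝ} (hu : LipschitzWith K u) (hc : HasCompactSupport u) :
    (∫⁻ x, ‖u x‖ₑ ^ p) ^ (1 / p) ≤ n * ∫⁻ x, ‖fderiv ℝ u x‖ₑ := by
  have hp0 : 0 < p := hp.symm.pos
  let L := (PiLp.continuousLinearEquiv 2 ℝ (fun _ : Fin n => ℝ)).symm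
  let v : (Fin n → ℝ) → ℝ := fun x => u (L x)
  have hv : LipschitzWith (K * ‖(L : (Fin n → ℝ) →L[ℝ] EuclideanSpace ℝ (Fin n))‖₊) v :=
    hu.comp L.toContinuousLinearMap.lipschitz
  have hcv : HasCompactSupport v := hc.comp_homeomorph L.toHomeomorph
  have h := osc_gns_pi hp hv hcv
  have hmp := PiLp.volume_preserving_toLp (Fin n)
  have hme : MeasurableEmbedding (@WithLp.toLp 2 (Fin n → ℝ)) :=
    (MeasurableEquiv.toLp 2 (Fin n → ℝ)).measurableEmbedding
  have e1 : ∫⁻ x, ‖v x‖ₑ ^ p = ∫⁻ x, ‖u x‖ₑ ^ p :=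
    hmp.lintegral_comp_emb hme (fun x => ‖u x‖ₑ ^ p)
  have e2 : ∫⁻ x, ∑ i, ‖lineDeriv ℝ v x (Pi.single i (1:ℝ))‖ₑ =
      ∫⁻ x, ∑ i, ‖lineDeriv ℝ u x (EuclideanSpace.single i (1:ℝ))‖ₑ := by
    rw [← hmp.lintegral_comp_emb hme]
    rfl
  rw [e1, e2] at h
  have h2 : ∫⁻ x, ∑ i, ‖lineDeriv ℝ u x (EuclideanSpace.single i (1:ℝ))‖ₑ ≤
      n * ∫⁻ x, ‖fderiv ℝ u x‖ₑ := by
    rw [← lintegral_const_mul _ (measurable_fderiv ℝ u).enorm]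
    apply lintegral_mono_ae
    filter_upwards [hu.ae_differentiableAt (μ := volume)] with x hx
    calc _ ≤ ∑ i : Fin n, ‖fderiv ℝ u x‖ₑ := by
          refine Finset.sum_le_sum fun i _ => ?_
          rw [hx.lineDeriv_eq_fderiv]
          refine ((fderiv ℝ u x).le_opENorm _).trans ?_
          have : ‖EuclideanSpace.single i (1:ℝ)‖ₑ = 1 := by
            rw [← ofReal_norm]; simp
          rw [this, mul_one]
      _ = _ := by simp
  calc (∫⁻ x, ‖u x‖ₑ ^ p) ^ (1 / p) ≤ (((n:ℝ≥0∞) * ∫⁻ x, ‖fderiv ℝ u x‖ₑ) ^ p) ^ (1 / p) := by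
        gcongr
        exact h.trans (by gcongr)
    _ = _ := by
        rw [← ENNReal.rpow_mul, mul_one_div_cancel hp0.ne', ENNReal.rpow_one]

section
variable {α : Type*} [MeasurableSpace α] {μ : Measure α} {f : α → ℝ}

theorem osc_distrib_anti (hfin : μ {x | f x ≠ 0} ≠ ∞) {r r' : ℝ} (h0 : 0 ≤ r) (h : r ≤ r') :
    distrib μ f r' ≤ distrib μ f r := by
  refine ENNReal.toReal_mono ?_ (measure_mono fun x hx => lt_of_le_of_lt h hx)
  refine ne_top_of_le_ne_top hfin (measure_mono fun x hx => ?_)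
  exact abs_pos.1 (h0.trans_lt hx)

theorem osc_fin (hfin : μ {x | f x ≠ 0} ≠ ∞) {r : ℝ} (h0 : 0 ≤ r) :
    μ {x | r < |f x|} ≠ ∞ :=
  ne_top_of_le_ne_top hfin (measure_mono fun x hx => abs_pos.1 (h0.trans_lt hx))

theorem osc_mem {M : ℝ} (hM : ∀ x, |f x| ≤ M) (hM0 : 0 ≤ M) {s : ℝ} (hs : 0 ≤ s) :
    M ∈ {t : ℝ | 0 ≤ t ∧ distrib μ f t ≤ s} := by
  refine ⟨hM0, ?_⟩
  have : {x | M < |f x|} = ∅ := by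
    ext x; simpa using hM x
  simpa [distrib, this] using hs

theorem osc_bdd (s : ℝ) : BddBelow {t : ℝ | 0 ≤ t ∧ distrib μ f t ≤ s} :=
  ⟨0, fun _ h => h.1⟩

theorem osc_rearr_nonneg (s : ℝ) : 0 ≤ rearr μ f s := Real.sInf_nonneg fun _ h => h.1

theorem osc_rearr_anti {M : ℝ} (hM : ∀ x, |f x| ≤ M) (hM0 : 0 ≤ M) (t : ℝ) :
    AntitoneOn (rearr μ f) (Icc 0 t) := by
  intro a ha b hb hab
  exact csInf_le_csInf (osc_bdd b) ⟨M, osc_mem hM hM0 ha.1⟩ fun x hx => ⟨hx.1, hx.2.trans hab⟩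

theorem osc_rearr_int {M : ℝ} (hM : ∀ x, |f x| ≤ M) (hM0 : 0 ≤ M) {t : ℝ} (ht : 0 < t) :
    IntervalIntegrable (rearr μ f) volume 0 t := by
  apply AntitoneOn.intervalIntegrable
  rw [uIcc_of_le ht.le]
  exact osc_rearr_anti hM hM0 t

theorem osc_rearr_aem {M : ℝ} (hM : ∀ x, |f x| ≤ M) (hM0 : 0 ≤ M) {t : ℝ} (ht : 0 < t) :
    AEMeasurable (rearr μ f) (volume.restrict (Ioc 0 t)) :=
  (osc_rearr_int hM hM0 ht).1.aemeasurable

/-- `∫_E |f| ≤ ∫₀ᵗ f*` when `μ E ≤ t`. -/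
theorem osc_hardy {M : ℝ} (hM : ∀ x, |f x| ≤ M) (hM0 : 0 ≤ M) {t : ℝ} (ht : 0 < t)
    (hfin : μ {x | f x ≠ 0} ≠ ∞) (hf : Measurable f) {E : Set α} 
    (hE : μ E ≤ ENNReal.ofReal t) :
    ∫⁻ x in E, ENNReal.ofReal |f x| ∂μ ≤ ∫⁻ s in Ioc 0 t, ENNReal.ofReal (rearr μ f s) := by
  rw [lintegral_eq_lintegral_meas_lt _ (ae_of_all _ fun x => abs_nonneg _) hf.abs.aemeasurable,
    lintegral_eq_lintegral_meas_le _ (ae_of_all _ fun x => osc_rearr_nonneg x)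
      (osc_rearr_aem hM hM0 ht)]
  refine setLIntegral_mono' measurableSet_Ioi fun r hr => ?_
  have hr : 0 < r := hr
  have hsub : Ioc 0 t ∩ Ioo 0 (distrib μ f r) ⊆ {s | r ≤ rearr μ f s} ∩ Ioc 0 t := by
    rintro s ⟨hs, hs2⟩
    refine ⟨?_, hs⟩
    refine le_csInf ⟨M, osc_mem hM hM0 hs.1.le⟩ fun y hy => ?_
    by_contra! hlt
    have := osc_distrib_anti hfin hy.1 hlt.le
    linarith [hy.2, hs2.2]
  have h1 : (μ.restrict E) {x | r < |f x|} ≤ ENNReal.ofReal (min t (distrib μ f r)) := by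
    rw [ENNReal.ofReal_min]
    refine le_min ?_ ?_
    · exact (measure_mono (subset_univ _)).trans (by simpa using hE)
    · rw [distrib, ENNReal.ofReal_toReal (osc_fin hfin hr.le)]
      exact Measure.restrict_apply_le _ _
  refine h1.trans ?_
  refine le_trans ?_ (Measure.le_restrict_apply _ _)
  refine le_trans ?_ (measure_mono hsub)
  have : Ioo 0 (min t (distrib μ f r)) ⊆ Ioc 0 t ∩ Ioo 0 (distrib μ f r) := fun s hs =>
    ⟨⟨hs.1, (hs.2.trans_le (min_le_left _ _)).le⟩, hs.1, hs.2.trans_le (min_le_right _ _)⟩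
  refine le_trans ?_ (measure_mono this)
  rw [Real.volume_Ioo, sub_zero]

theorem osc_layer {M : ℝ} (hM : ∀ x, |f x| ≤ M) (hM0 : 0 ≤ M) {t : ℝ} (ht : 0 < t)
    (hfin : μ {x | f x ≠ 0} ≠ ∞) (hf : Measurable f) {a : ℝ} (ha : 0 ≤ a)
    (hat : ∀ s ∈ Ioc 0 t, a ≤ rearr μ f s) :
    ∫⁻ s in Ioc 0 t, ENNReal.ofReal (rearr μ f s - a) ≤
      ∫⁻ x, ENNReal.ofReal (max (|f x| - a) 0) ∂μ := by
  rw [lintegral_eq_lintegral_meas_lt (f := fun x => max (|f x| - a) 0) _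
      (ae_of_all _ fun x => le_max_right _ _)
      ((hf.abs.sub_const a).max measurable_const).aemeasurable,
    lintegral_eq_lintegral_meas_lt _ ?_ ((osc_rearr_aem hM hM0 ht).sub_const a)]
  · refine setLIntegral_mono' measurableSet_Ioi fun r hr => ?_
    have hr : 0 < r := hr
    have e : {x | r < max (|f x| - a) 0} = {x | a + r < |f x|} := by
      ext x
      simp only [mem_setOf_eq, lt_max_iff]
      constructor
      · rintro (h | h) <;> linarith
      · intro h; left; linarith
    rw [e, Measure.restrict_apply' measurableSet_Ioc]
    have hsub : {s | r < rearr μ f s - a} ∩ Ioc 0 t ⊆ Ioo 0 (distrib μ f (a + r)) := by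
      rintro s ⟨h1, h2⟩
      refine ⟨h2.1, ?_⟩
      by_contra! hlt
      have : rearr μ f s ≤ a + r := csInf_le (osc_bdd s) ⟨by linarith, hlt⟩
      have h1 : r < rearr μ f s - a := h1
      linarith
    refine (measure_mono hsub).trans ?_
    rw [Real.volume_Ioo, sub_zero, distrib, ENNReal.ofReal_toReal (osc_fin hfin (by linarith))]
  · filter_upwards [ae_restrict_mem measurableSet_Ioc] with s hs
    simpa using hat s hs

theorem osc_level {M : ℝ} (hM : ∀ x, |f x| ≤ M) (hM0 : 0 ≤ M) {t : ℝ} (ht : 0 < t)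
    (hfin : μ {x | f x ≠ 0} ≠ ∞) :
    μ {x | rearr μ f t < |f x|} ≤ ENNReal.ofReal t := by
  set a := rearr μ f t with ha
  have ha0 : 0 ≤ a := osc_rearr_nonneg t
  have e : {x | a < |f x|} = ⋃ k : ℕ, {x | a + 1 / ((k:ℝ) + 1) < |f x|} := by
    ext x
    simp only [mem_setOf_eq, mem_iUnion]
    constructor
    · intro h
      obtain ⟨k, hk⟩ := exists_nat_one_div_lt (sub_pos.2 h)
      exact ⟨k, by linarith⟩
    · rintro ⟨k, hk⟩
      have : 0 < 1 / ((k:ℝ) + 1) := by positivity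
      linarith
  have hmono : Monotone fun k : ℕ => {x | a + 1 / ((k:ℝ) + 1) < |f x|} := by
    intro k l hkl x hx
    have h1 : 1 / ((l:ℝ) + 1) ≤ 1 / ((k:ℝ) + 1) := by gcongr
    have hx : a + 1 / ((k:ℝ) + 1) < |f x| := hx
    show a + 1 / ((l:ℝ) + 1) < |f x|
    linarith
  rw [e, hmono.measure_iUnion]
  refine iSup_le fun k => ?_
  have hk : 0 < 1 / ((k:ℝ) + 1) := by positivity
  obtain ⟨y, hy, hlt⟩ := exists_lt_of_csInf_lt ⟨M, osc_mem hM hM0 ht.le⟩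
    (show sInf {r : ℝ | 0 ≤ r ∧ distrib μ f r ≤ t} < a + 1 / ((k:ℝ) + 1) by
      change a < _; linarith)
  have := (osc_distrib_anti hfin hy.1 hlt.le).trans hy.2
  rw [← ENNReal.ofReal_toReal (osc_fin hfin (by linarith : 0 ≤ a + 1 / ((k:ℝ) + 1)))]
  exact ENNReal.ofReal_le_ofReal this

end

theorem osc_fderiv_trunc {E : Type*} [NormedAddCommGroup E] [NormedSpace ℝ E] {f : E → ℝ}
    (hf : Continuous f) {a : ℝ} (ha : 0 ≤ a) (x : E) :
    ‖fderiv ℝ (fun x => max (|f x| - a) 0) x‖ₑ ≤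
      {x | a < |f x|}.indicator (fun x => ‖fderiv ℝ f x‖ₑ) x := by
  by_cases hx : x ∈ {x | a < |f x|}
  · rw [indicator_of_mem hx]
    have hx' : a < |f x| := hx
    have hev : ∀ᶠ y in 𝓝 x, a < |f y| := (hf.abs.continuousAt).eventually (lt_mem_nhds hx')
    rcases lt_or_gt_of_ne (abs_pos.1 (ha.trans_lt hx')) with h | h
    · have h2 : ∀ᶠ y in 𝓝 x, f y < 0 := hf.continuousAt.eventually (gt_mem_nhds h)
      have : (fun x => max (|f x| - a) 0) =ᶠ[𝓝 x] fun y => -f y - a := by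
        filter_upwards [hev, h2] with y hy hy2
        rw [max_eq_left (by linarith), abs_of_neg hy2]
      rw [this.fderiv_eq, fderiv_sub_const, fderiv_fun_neg, enorm_neg]
    · have h2 : ∀ᶠ y in 𝓝 x, 0 < f y := hf.continuousAt.eventually (lt_mem_nhds h)
      have : (fun x => max (|f x| - a) 0) =ᶠ[𝓝 x] fun y => f y - a := by
        filter_upwards [hev, h2] with y hy hy2
        rw [max_eq_left (by linarith), abs_of_pos hy2]
      rw [this.fderiv_eq, fderiv_sub_const]
  · rw [indicator_of_notMem hx]
    have hx' : |f x| ≤ a := not_lt.1 hx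
    have : IsLocalMin (fun x => max (|f x| - a) 0) x := by
      refine Eventually.of_forall fun y => ?_
      show max (|f x| - a) 0 ≤ max (|f y| - a) 0
      rw [max_eq_right (by linarith)]
      exact le_max_right _ _
    rw [this.fderiv_eq_zero, ← ofReal_norm, norm_zero, ENNReal.ofReal_zero]

/-- For `n > 1` there is `C = C(n)` such that for every
`f ∈ Lip₀(ℝⁿ)` and `t > 0`, `f**(t) - f*(t) ≤ C t^{1/n} |∇f|**(t)`. -/
theorem euclidean_oscillation_inequality (n : ℕ) (hn : 1 < n) :
    ∃ C : ℝ, 0 < C ∧ ∀ f : EuclideanSpace ℝ (Fin n) → ℝ,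
      (∃ K, LipschitzWith K f) → HasCompactSupport f → ∀ t : ℝ, 0 < t →
        rearr2 volume f t - rearr volume f t ≤
          C * t ^ ((1:ℝ) / (n:ℝ)) * rearr2 volume (fun x => ‖fderiv ℝ f x‖) t := by
  have hn1 : (1:ℝ) < n := by exact_mod_cast hn
  refine ⟨n, by linarith, ?_⟩
  rintro f ⟨K, hK⟩ hc t ht
  have hp := Real.HolderConjugate.conjExponent hn1
  set p := Real.conjExponent (n:ℝ) with hpdef
  have hp0 : 0 < p := hp.symm.pos
  set a := rearr volume f t with ha
  have ha0 : 0 ≤ a := osc_rearr_nonneg t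
  obtain ⟨M, hM⟩ := hc.exists_bound_of_continuous hK.continuous
  have hM : ∀ x, |f x| ≤ M := hM
  have hM0 : 0 ≤ M := (abs_nonneg _).trans (hM 0)
  have hfin : volume {x | f x ≠ 0} ≠ ∞ :=
    ne_top_of_le_ne_top hc.isCompact.measure_lt_top.ne (measure_mono (subset_tsupport f))
  set h : EuclideanSpace ℝ (Fin n) → ℝ := fun x => ‖fderiv ℝ f x‖ with hh
  have hhM : ∀ x, |h x| ≤ (K:ℝ) := fun x => by
    rw [hh, abs_of_nonneg (norm_nonneg _)]
    exact norm_fderiv_le_of_lipschitz ℝ hK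
  have hhfin : volume {x | h x ≠ 0} ≠ ∞ := by
    refine ne_top_of_le_ne_top hc.isCompact.measure_lt_top.ne (measure_mono fun x hx => ?_)
    have hx : ‖fderiv ℝ f x‖ ≠ 0 := hx
    exact support_fderiv_subset ℝ (norm_ne_zero_iff.1 hx)
  have hhm : Measurable h := (measurable_fderiv ℝ f).norm
  set E := {x | a < |f x|} with hE
  have hEm : MeasurableSet E := measurableSet_lt measurable_const hK.continuous.measurable.abs
  have hEt : volume E ≤ ENNReal.ofReal t := osc_level hM hM0 ht hfin
  set g : EuclideanSpace ℝ (Fin n) → ℝ := fun x => max (|f x| - a) 0 with hg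
  have hgl : LipschitzWith K g := by
    refine LipschitzWith.of_dist_le_mul fun x y => ?_
    refine le_trans ?_ (hK.dist_le_mul x y)
    rw [Real.dist_eq, Real.dist_eq]
    refine (abs_max_sub_max_le_abs _ _ _).trans ?_
    rw [sub_sub_sub_cancel_right]
    exact abs_abs_sub_abs_le _ _
  have hgc : HasCompactSupport g := by
    refine hc.mono fun x hx => ?_
    by_contra hx0
    apply hx
    have : f x = 0 := by simpa using hx0
    simp [hg, this, ha0]
  have hg0 : ∀ x, 0 ≤ g x := fun x => le_max_right _ _
  -- Hölder
  have h1 : ∫⁻ x, ENNReal.ofReal (g x) ≤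
      ENNReal.ofReal t ^ (1 / (n:ℝ)) * (∫⁻ x, ‖g x‖ₑ ^ p) ^ (1 / p) := by
    have hH := ENNReal.lintegral_mul_le_Lp_mul_Lq volume hp
      (f := E.indicator fun _ => (1:ℝ≥0∞)) (g := fun x => ‖g x‖ₑ)
      (measurable_const.indicator hEm).aemeasurable hgl.continuous.measurable.enorm.aemeasurable
    have e1 : ∫⁻ x, (E.indicator (fun _ => (1:ℝ≥0∞)) x) ^ (n:ℝ) = volume E := by
      rw [← lintegral_indicator_one hEm]
      refine lintegral_congr fun x => ?_
      by_cases hx : x ∈ E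
      · simp [hx]
      · simp [hx]; omega
    rw [e1] at hH
    refine le_trans (le_of_eq ?_) (hH.trans ?_)
    · refine lintegral_congr fun x => ?_
      by_cases hx : x ∈ E
      · simp [hx, Real.enorm_eq_ofReal (hg0 x)]
      · have hx' : |f x| ≤ a := not_lt.1 hx
        have : g x = 0 := max_eq_right (by linarith)
        simp [this]
    · gcongr
  have h2 : ∫⁻ x, ‖fderiv ℝ g x‖ₑ ≤ ∫⁻ x in E, ENNReal.ofReal |h x| := by
    rw [← lintegral_indicator hEm]
    refine lintegral_mono fun x => (osc_fderiv_trunc hK.continuous ha0 x).trans (le_of_eq ?_)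
    by_cases hx : x ∈ E
    · rw [indicator_of_mem hx, indicator_of_mem hx, hh, abs_of_nonneg (norm_nonneg _), ofReal_norm]
    · rw [indicator_of_notMem hx, indicator_of_notMem hx]
  have hat : ∀ s ∈ Ioc 0 t, a ≤ rearr volume f s := fun s hs =>
    osc_rearr_anti hM hM0 t ⟨hs.1.le, hs.2⟩ ⟨ht.le, le_rfl⟩ hs.2
  have h3 := osc_layer hM hM0 ht hfin hK.continuous.measurable ha0 hat
  have h4 := osc_hardy hhM K.2 ht hhfin hhm hEt
  have h5 : ∫⁻ s in Ioc 0 t, ENNReal.ofReal (rearr volume f s - a) ≤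
      ENNReal.ofReal t ^ (1 / (n:ℝ)) * (n * ∫⁻ s in Ioc 0 t, ENNReal.ofReal (rearr volume h s)) := by
    refine h3.trans (h1.trans ?_)
    gcongr
    refine (osc_gns hp hgl hgc).trans ?_
    gcongr
    exact h2.trans h4
  have if1 := osc_rearr_int (μ := volume) hM hM0 ht
  have if2 := osc_rearr_int (μ := volume) hhM K.2 ht
  have r1 : ENNReal.ofReal (∫ s in (0:ℝ)..t, (rearr volume f s - a)) =
      ∫⁻ s in Ioc 0 t, ENNReal.ofReal (rearr volume f s - a) := by
    rw [intervalIntegral.integral_of_le ht.le]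
    refine ofReal_integral_eq_lintegral_ofReal (if1.sub intervalIntegrable_const).1 ?_
    filter_upwards [ae_restrict_mem measurableSet_Ioc] with s hs
    simpa using hat s hs
  have r2 : ENNReal.ofReal (∫ s in (0:ℝ)..t, rearr volume h s) =
      ∫⁻ s in Ioc 0 t, ENNReal.ofReal (rearr volume h s) := by
    rw [intervalIntegral.integral_of_le ht.le]
    exact ofReal_integral_eq_lintegral_ofReal if2.1 (ae_of_all _ fun s => osc_rearr_nonneg s)
  have hI0 : 0 ≤ ∫ s in (0:ℝ)..t, rearr volume h s :=
    intervalIntegral.integral_nonneg ht.le fun s _ => osc_rearr_nonneg s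
  rw [← r1, ← r2, ENNReal.ofReal_rpow_of_pos ht, ← ENNReal.ofReal_natCast n,
    ← ENNReal.ofReal_mul (by positivity), ← ENNReal.ofReal_mul (by positivity),
    ENNReal.ofReal_le_ofReal_iff (by positivity),
    intervalIntegral.integral_sub if1 intervalIntegrable_const,
    intervalIntegral.integral_const, sub_zero, smul_eq_mul] at h5
  unfold rearr2
  calc 1 / t * (∫ s in (0:ℝ)..t, rearr volume f s) - a
      = 1 / t * ((∫ s in (0:ℝ)..t, rearr volume f s) - t * a) := by field_simp
    _ ≤ 1 / t * (t ^ (1 / (n:ℝ)) * (n * ∫ s in (0:ℝ)..t, rearr volume h s)) := by gcongr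
    _ = _ := by ring
end
end

section
/- Let n > 1. There exists a constant C = C(n) such that for every f ∈ Lip₀(ℝⁿ) and every t > 0: ∫₀ᵗ (f**(s) − f*(s)) s^{−1/n} ds ≤ C·t·|∇f|**(t), where |∇f|**(t) = (1/t)∫₀ᵗ |∇f|*(s)ds. -/
open MeasureTheory Set Filter Topology
open scoped ENNReal NNReal

noncomputable section

open Module in
lemma gns_smoothing {n : ℕ} (u : EuclideanSpace ℝ (Fin n) → ℝ) {K : ℝ≥0} (hu : LipschitzWith K u)
    (φ : ContDiffBump (0 : EuclideanSpace ℝ (Fin n))) :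
    ∫⁻ x, ‖fderiv ℝ (convolution (φ.normed volume) u (ContinuousLinearMap.lsmul ℝ ℝ) volume) x‖ₑ
      ≤ ∫⁻ x, ‖fderiv ℝ u x‖ₑ := by
  have hd : ∀ x, fderiv ℝ (convolution (φ.normed volume) u (ContinuousLinearMap.lsmul ℝ ℝ) volume) x
      = ∫ y, φ.normed volume y • fderiv ℝ u (x - y) := by
    intro x
    have hdiff : ∀ᵐ y : EuclideanSpace ℝ (Fin n), DifferentiableAt ℝ u (x - y) :=
      (quasiMeasurePreserving_sub_left_of_right_invariant volume x).ae
        (p := fun z => DifferentiableAt ℝ u z) hu.ae_differentiableAt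
    have hm : AEStronglyMeasurable (fun y => φ.normed volume y • fderiv ℝ u (x - y)) volume := by
      refine AEStronglyMeasurable.smul φ.continuous_normed.aestronglyMeasurable ?_
      exact ((measurable_fderiv ℝ u).comp (measurable_const.sub measurable_id)).aestronglyMeasurable
    have := hasFDerivAt_integral_of_dominated_loc_of_lip (μ := volume) (𝕜 := ℝ)
      (F := fun (x : EuclideanSpace ℝ (Fin n)) y => φ.normed volume y • u (x - y))
      (F' := fun y => φ.normed volume y • fderiv ℝ u (x - y)) (x₀ := x) (s := univ)
      (bound := fun y => φ.normed volume y * K)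
      univ_mem
      (Eventually.of_forall fun z => (φ.continuous_normed.smul
        (hu.continuous.comp (continuous_const.sub continuous_id))).aestronglyMeasurable)
      ((φ.continuous_normed.smul
        (hu.continuous.comp (continuous_const.sub continuous_id))).integrable_of_hasCompactSupport
          (φ.hasCompactSupport_normed.smul_right)) hm
      (Eventually.of_forall fun y => ?_)
      (φ.integrable_normed.mul_const _) ?_
    · exact this.2.fderiv
    · refine LipschitzWith.lipschitzOnWith (LipschitzWith.of_dist_le_mul fun a b => ?_)
      have h0 := φ.nonneg_normed (μ := volume) y
      have h1 := hu.dist_le_mul (a - y) (b - y)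
      simp only [smul_eq_mul, Real.coe_nnabs, Real.dist_eq, dist_sub_right] at h1 ⊢
      rw [← mul_sub, abs_mul, abs_mul, abs_of_nonneg h0, abs_of_nonneg (NNReal.coe_nonneg K), mul_assoc]
      exact mul_le_mul_of_nonneg_left h1 h0
    · filter_upwards [hdiff] with y hy
      have := (HasFDerivAt.comp x hy.hasFDerivAt ((hasFDerivAt_id x).sub_const y)).const_smul
        (φ.normed volume y)
      rw [ContinuousLinearMap.comp_id] at this
      exact this
  have hmeas : Measurable fun z => ‖fderiv ℝ u z‖ₑ := (measurable_fderiv ℝ u).enorm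
  have hφm : Measurable fun z => ‖φ.normed volume z‖ₑ :=
    (φ.continuous_normed (μ := volume)).measurable.enorm
  calc _ ≤ ∫⁻ x, ∫⁻ y, ‖φ.normed volume y‖ₑ * ‖fderiv ℝ u (x - y)‖ₑ := by
        refine lintegral_mono fun x => ?_
        rw [hd x]
        refine (enorm_integral_le_lintegral_enorm _).trans (le_of_eq ?_)
        simp_rw [enorm_smul]
    _ = ∫⁻ y, ∫⁻ x, ‖φ.normed volume y‖ₑ * ‖fderiv ℝ u (x - y)‖ₑ := by
        apply lintegral_lintegral_swap
        refine Measurable.aemeasurable ?_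
        exact (hφm.comp measurable_snd).mul (hmeas.comp (measurable_fst.sub measurable_snd))
    _ = ∫⁻ y, ‖φ.normed volume y‖ₑ * ∫⁻ x, ‖fderiv ℝ u x‖ₑ := by
        refine lintegral_congr fun y => ?_
        rw [lintegral_const_mul _ (show Measurable fun x => ‖fderiv ℝ u (x - y)‖ₑ from
            hmeas.comp (measurable_id.sub_const y)),
          lintegral_sub_right_eq_self (fun x => ‖fderiv ℝ u x‖ₑ) y]
    _ = (∫⁻ y, ‖φ.normed volume y‖ₑ) * ∫⁻ x, ‖fderiv ℝ u x‖ₑ := lintegral_mul_const _ hφm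
    _ = _ := by
        have : ∫⁻ y, ‖φ.normed volume y‖ₑ = 1 := by
          rw [← ofReal_integral_norm_eq_lintegral_enorm φ.integrable_normed]
          simp_rw [Real.norm_eq_abs, abs_of_nonneg (φ.nonneg_normed _)]
          rw [φ.integral_normed]; simp
        rw [this, one_mul]

lemma gns_lip {n : ℕ} {p : ℝ≥0} (hp : NNReal.HolderConjugate n p)
    (u : EuclideanSpace ℝ (Fin n) → ℝ) {K : ℝ≥0} (hu : LipschitzWith K u)
    (hc : HasCompactSupport u) :
    eLpNorm u p volume ≤ eLpNormLESNormFDerivOneConst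
      (volume : Measure (EuclideanSpace ℝ (Fin n))) p * ∫⁻ x, ‖fderiv ℝ u x‖ₑ := by
  let φ : ℕ → ContDiffBump (0 : EuclideanSpace ℝ (Fin n)) := fun k =>
    ⟨1 / ((k:ℝ) + 1) / 2, 1 / ((k:ℝ) + 1), by positivity, half_lt_self (by positivity)⟩
  have hφ : Tendsto (fun k => (φ k).rOut) atTop (𝓝 0) := tendsto_one_div_add_atTop_nhds_zero_nat
  let v : ℕ → EuclideanSpace ℝ (Fin n) → ℝ := fun k =>
    convolution ((φ k).normed volume) u (ContinuousLinearMap.lsmul ℝ ℝ) volume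
  have hcd : ∀ k, ContDiff ℝ 1 (v k) := fun k =>
    (φ k).hasCompactSupport_normed.contDiff_convolution_left (n := 1) _ (φ k).contDiff_normed
      hu.continuous.locallyIntegrable
  have hcs : ∀ k, HasCompactSupport (v k) := fun k =>
    HasCompactSupport.convolution _ (φ k).hasCompactSupport_normed hc
  have hlim := Lp.eLpNorm_lim_le_liminf_eLpNorm (p := (p : ℝ≥0∞)) (μ := volume) (f := v)
    (fun k => (hcd k).continuous.aestronglyMeasurable) u
    (Eventually.of_forall fun x =>
      ContDiffBump.convolution_tendsto_right_of_continuous hφ hu.continuous x)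
  refine hlim.trans ?_
  refine liminf_le_of_frequently_le' (Eventually.of_forall fun k => ?_).frequently
  refine (eLpNorm_le_eLpNorm_fderiv_one volume (hcd k) (hcs k) (p := p) (by simpa using hp)).trans ?_
  gcongr
  rw [eLpNorm_one_eq_lintegral_enorm]
  exact gns_smoothing u hu (φ k)

lemma fderiv_trunc {E : Type*} [NormedAddCommGroup E] [NormedSpace ℝ E] (f : E → ℝ)
    (hf : Continuous f) {a b : ℝ} (ha : 0 ≤ a) (hab : a < b) (x : E) :
    ‖fderiv ℝ (fun x => min (max (|f x|) a) b - a) x‖ₑ ≤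
      {x | a < |f x| ∧ |f x| < b}.indicator (fun x => ‖fderiv ℝ f x‖ₑ) x := by
  by_cases h1 : a < |f x|
  · by_cases h2 : |f x| < b
    · rw [indicator_of_mem (show x ∈ {x | a < |f x| ∧ |f x| < b} from ⟨h1, h2⟩)]
      have e1 : ∀ᶠ y in 𝓝 x, a < |f y| := continuousAt_const.eventually_lt hf.abs.continuousAt h1
      have e2 : ∀ᶠ y in 𝓝 x, |f y| < b := hf.abs.continuousAt.eventually_lt continuousAt_const h2
      rcases lt_or_gt_of_ne (abs_pos.1 (ha.trans_lt h1)) with h | h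
      · have e3 : ∀ᶠ y in 𝓝 x, f y < 0 := hf.continuousAt.eventually_lt continuousAt_const h
        have : (fun x => min (max (|f x|) a) b - a) =ᶠ[𝓝 x] fun y => - f y - a := by
          filter_upwards [e1, e2, e3] with y h1 h2 h3
          rw [max_eq_left h1.le, min_eq_left h2.le, abs_of_neg h3]
        rw [this.fderiv_eq, fderiv_sub_const, fderiv_fun_neg, enorm_neg]
      · have e3 : ∀ᶠ y in 𝓝 x, 0 < f y := continuousAt_const.eventually_lt hf.continuousAt h
        have : (fun x => min (max (|f x|) a) b - a) =ᶠ[𝓝 x] fun y => f y - a := by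
          filter_upwards [e1, e2, e3] with y h1 h2 h3
          rw [max_eq_left h1.le, min_eq_left h2.le, abs_of_pos h3]
        rw [this.fderiv_eq, fderiv_sub_const]
    · have : IsLocalMax (fun x => min (max (|f x|) a) b - a) x := by
        refine Eventually.of_forall fun y => ?_
        have : min (max (|f x|) a) b = b := min_eq_right ((not_lt.1 h2).trans (le_max_left _ _))
        simp only [this]
        linarith [min_le_right (max (|f y|) a) b]
      have h0 : ‖fderiv ℝ (fun x => min (max (|f x|) a) b - a) x‖ = 0 := by
        rw [this.fderiv_eq_zero]; exact norm_zero
      rw [← ofReal_norm_eq_enorm, h0, ENNReal.ofReal_zero]; exact zero_le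
  · have : IsLocalMin (fun x => min (max (|f x|) a) b - a) x := by
      refine Eventually.of_forall fun y => ?_
      have : min (max (|f x|) a) b = a := by
        rw [max_eq_right (not_lt.1 h1), min_eq_left hab.le]
      simp only [this]
      have : a ≤ min (max (|f y|) a) b := le_min (le_max_right _ _) hab.le
      linarith
    have h0 : ‖fderiv ℝ (fun x => min (max (|f x|) a) b - a) x‖ = 0 := by
      rw [this.fderiv_eq_zero]; exact norm_zero
    rw [← ofReal_norm_eq_enorm, h0, ENNReal.ofReal_zero]; exact zero_le

lemma weak_level {n : ℕ} {p : ℝ≥0} (hp : NNReal.HolderConjugate n p)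
    (f : EuclideanSpace ℝ (Fin n) → ℝ) {K : ℝ≥0} (hf : LipschitzWith K f)
    (hc : HasCompactSupport f) {a ε : ℝ} (ha : 0 ≤ a) (hε : 0 < ε) :
    ENNReal.ofReal ε * (volume {x | a + ε < |f x|}) ^ (1 / (p:ℝ)) ≤ eLpNormLESNormFDerivOneConst
      (volume : Measure (EuclideanSpace ℝ (Fin n))) p *
        ∫⁻ x, {x | a < |f x| ∧ |f x| < a + ε}.indicator (fun x => ‖fderiv ℝ f x‖ₑ) x := by
  have hpos : 0 < p := hp.symm.pos
  set u : EuclideanSpace ℝ (Fin n) → ℝ := fun x => min (max (|f x|) a) (a + ε) - a with hu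
  have hL : LipschitzWith K u := by
    have h1 : LipschitzWith K fun x => |f x| := by
      have := (lipschitzWith_one_norm (E := ℝ)).comp hf
      rw [one_mul] at this
      exact this
    have := ((h1.max_const a).min_const (a + ε))
    refine LipschitzWith.of_dist_le_mul fun x y => ?_
    simpa [hu] using this.dist_le_mul x y
  have hcu : HasCompactSupport u := by
    have := hc.comp_left (g := fun y : ℝ => min (max (|y|) a) (a + ε) - a) (by simp [ha, hε.le])
    exact this
  have h2 := pow_mul_meas_ge_le_eLpNorm volume (p := (p:ℝ≥0∞)) (by simpa using hpos.ne')
    (by simp) (f := u) hL.continuous.aestronglyMeasurable (ENNReal.ofReal ε ^ (p:ℝ))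
  have h3 := gns_lip hp u hL hcu
  have hp' : (0:ℝ) < p := by exact_mod_cast hpos
  calc _ ≤ eLpNorm u p volume := by
        refine le_trans ?_ h2
        rw [ENNReal.mul_rpow_of_nonneg _ _ (by positivity), ENNReal.coe_toReal, ← ENNReal.rpow_mul,
          mul_one_div_cancel hp'.ne', ENNReal.rpow_one]
        gcongr with x
        intro hx
        rw [Real.enorm_eq_ofReal_abs]
        refine ENNReal.rpow_le_rpow ?_ hp'.le
        refine ENNReal.ofReal_le_ofReal ?_
        have : u x = ε := by
          simp only [hu]
          rw [min_eq_right (hx.le.trans (le_max_left _ _))]; ring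
        rw [this]; exact le_abs_self _
    _ ≤ _ := h3
    _ ≤ _ := by
        gcongr with x
        exact fderiv_trunc f hf.continuous ha (by linarith) x

lemma strong_level {n : ℕ} {p : ℝ≥0} (hp : NNReal.HolderConjugate n p)
    (f : EuclideanSpace ℝ (Fin n) → ℝ) {K : ℝ≥0} (hf : LipschitzWith K f)
    (hc : HasCompactSupport f) {l : ℝ} (hl : 0 ≤ l) (hfin : volume {x | l < |f x|} ≠ ∞) :
    ∫⁻ τ in Ioi (0:ℝ), (volume {x | l + τ < |f x|}) ^ (1 / (p:ℝ)) ≤ eLpNormLESNormFDerivOneConst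
      (volume : Measure (EuclideanSpace ℝ (Fin n))) p *
        ∫⁻ x in {x | l < |f x|}, ‖fderiv ℝ f x‖ₑ := by
  set C : ℝ≥0∞ := (eLpNormLESNormFDerivOneConst
      (volume : Measure (EuclideanSpace ℝ (Fin n))) p : ℝ≥0∞) with hC
  have hfm : Measurable fun x => |f x| := hf.continuous.abs.measurable
  have hgm : Measurable fun x => ‖fderiv ℝ f x‖ₑ := (measurable_fderiv ℝ f).enorm
  set A : ℝ≥0∞ := (volume {x | l < |f x|}) ^ (1 / (p:ℝ)) with hA
  have hAt : A ≠ ∞ := ENNReal.rpow_ne_top_of_nonneg (by positivity) hfin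
  have key : ∀ ε : ℝ, 0 < ε → ∫⁻ τ in Ioi (0:ℝ), (volume {x | l + τ < |f x|}) ^ (1 / (p:ℝ)) ≤
      ENNReal.ofReal ε * A + C * ∫⁻ x in {x | l < |f x|}, ‖fderiv ℝ f x‖ₑ := by
    intro ε hε
    rw [← Ioc_union_Ioi_eq_Ioi hε.le]
    refine (lintegral_union_le _ _ _).trans (add_le_add ?_ ?_)
    · calc _ ≤ ∫⁻ τ in Ioc 0 ε, A := by
            refine setLIntegral_mono measurable_const fun τ hτ => ?_
            rw [hA]
            gcongr with x
            linarith [hτ.1]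
        _ = _ := by simp [mul_comm]
    · have hε0 : ENNReal.ofReal ε ≠ 0 := by simpa using hε
      have hεt : ENNReal.ofReal ε ≠ ∞ := by simp
      set S : Set (ℝ × EuclideanSpace ℝ (Fin n)) :=
        {q | l + q.1 - ε < |f q.2| ∧ |f q.2| < l + q.1} with hS
      have hSm : MeasurableSet S := by
        refine MeasurableSet.inter (s₁ := {q : ℝ × EuclideanSpace ℝ (Fin n) | l + q.1 - ε < |f q.2|}) 
          (s₂ := {q : ℝ × EuclideanSpace ℝ (Fin n) | |f q.2| < l + q.1})
          (measurableSet_lt ?_ ?_) (measurableSet_lt ?_ ?_)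
        · fun_prop
        · exact hfm.comp measurable_snd
        · exact hfm.comp measurable_snd
        · fun_prop
      calc _ ≤ ∫⁻ τ in Ioi ε, (ENNReal.ofReal ε)⁻¹ * C *
              ∫⁻ x, S.indicator (fun q => ‖fderiv ℝ f q.2‖ₑ) (τ, x) := by
            refine setLIntegral_mono' measurableSet_Ioi fun τ hτ => ?_
            have := weak_level hp f hf hc (a := l + τ - ε) (ε := ε)
              (by have : ε < τ := hτ
                  linarith) hε
            rw [sub_add_cancel] at this
            rw [mul_assoc, ← ENNReal.mul_le_mul_iff_right hε0 hεt, ← mul_assoc, ← mul_assoc,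
              ENNReal.mul_inv_cancel hε0 hεt, one_mul]
            exact this
        _ = (ENNReal.ofReal ε)⁻¹ * C * ∫⁻ τ in Ioi ε,
              ∫⁻ x, S.indicator (fun q => ‖fderiv ℝ f q.2‖ₑ) (τ, x) := by
            rw [lintegral_const_mul]
            exact ((hgm.comp measurable_snd).indicator hSm).lintegral_prod_right'
        _ = (ENNReal.ofReal ε)⁻¹ * C * ∫⁻ x, ∫⁻ τ in Ioi ε,
              S.indicator (fun q => ‖fderiv ℝ f q.2‖ₑ) (τ, x) := by
            rw [lintegral_lintegral_swap]
            exact ((hgm.comp measurable_snd).indicator hSm).aemeasurable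
        _ ≤ (ENNReal.ofReal ε)⁻¹ * C * ∫⁻ x, ENNReal.ofReal ε *
              {x | l < |f x|}.indicator (fun x => ‖fderiv ℝ f x‖ₑ) x := by
            gcongr with x
            by_cases hx : l < |f x|
            · rw [indicator_of_mem (show x ∈ {x | l < |f x|} from hx)]
              calc _ ≤ ∫⁻ τ in Ioi ε, (Ioo (|f x| - l) (|f x| - l + ε)).indicator
                    (fun _ => ‖fderiv ℝ f x‖ₑ) τ := by
                    refine lintegral_mono fun τ => ?_
                    by_cases h : (τ, x) ∈ S
                    · rw [indicator_of_mem h, indicator_of_mem]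
                      have h1 := h.1
                      have h2 := h.2
                      simp only at h1 h2
                      constructor <;> linarith
                    · rw [indicator_of_notMem h]; simp
                _ ≤ ∫⁻ τ, (Ioo (|f x| - l) (|f x| - l + ε)).indicator
                    (fun _ => ‖fderiv ℝ f x‖ₑ) τ := setLIntegral_le_lintegral _ _
                _ = _ := by
                    rw [lintegral_indicator_const measurableSet_Ioo, Real.volume_Ioo, mul_comm]
                    congr 2; ring
            · refine le_of_eq_of_le ?_ zero_le
              rw [setLIntegral_eq_zero_iff measurableSet_Ioi]
              · refine Eventually.of_forall fun τ hτ => ?_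
                rw [indicator_of_notMem]
                intro h
                have h1 := h.1
                simp only at h1
                have : ε < τ := hτ
                exact hx (by linarith)
              · exact ((hgm.comp measurable_snd).indicator hSm).comp measurable_prodMk_right
        _ = _ := by
            have hm : MeasurableSet {x | l < |f x|} := measurableSet_lt measurable_const hfm
            rw [lintegral_const_mul _ (hgm.indicator hm), lintegral_indicator hm]
            rw [mul_comm _ C, mul_assoc, ← mul_assoc _ (ENNReal.ofReal ε),
              ENNReal.inv_mul_cancel hε0 hεt, one_mul]
  have hlim : Tendsto (fun ε : ℝ => ENNReal.ofReal ε * A +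
      C * ∫⁻ x in {x | l < |f x|}, ‖fderiv ℝ f x‖ₑ) (𝓝[>] 0)
      (𝓝 (0 * A + C * ∫⁻ x in {x | l < |f x|}, ‖fderiv ℝ f x‖ₑ)) := by
    refine Tendsto.add ?_ tendsto_const_nhds
    refine ENNReal.Tendsto.mul_const ?_ (Or.inr hAt)
    have : Tendsto (fun ε : ℝ => ENNReal.ofReal ε) (𝓝 0) (𝓝 (ENNReal.ofReal 0)) :=
      (ENNReal.continuous_ofReal.tendsto 0)
    rw [ENNReal.ofReal_zero] at this
    exact this.mono_left nhdsWithin_le_nhds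
  rw [zero_mul, zero_add] at hlim
  exact ge_of_tendsto hlim (by filter_upwards [self_mem_nhdsWithin] with ε hε using key ε hε)

section rearrLemmas

variable {α : Type*} [MeasurableSpace α] {μ : Measure α} {h : α → ℝ}

lemma rearr_bdd (s : ℝ) : BddBelow {t : ℝ | 0 ≤ t ∧ distrib μ h t ≤ s} := ⟨0, fun _ hx => hx.1⟩

lemma rearr_nonneg (s : ℝ) : 0 ≤ rearr μ h s := Real.sInf_nonneg fun _ hx => hx.1

lemma rearr_le {s τ : ℝ} (hτ : 0 ≤ τ) (hd : distrib μ h τ ≤ s) : rearr μ h s ≤ τ :=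
  csInf_le (rearr_bdd s) ⟨hτ, hd⟩

lemma rearr_ne {B : ℝ} (hB : ∀ x, |h x| ≤ B) {s : ℝ} (hs : 0 ≤ s) :
    {t : ℝ | 0 ≤ t ∧ distrib μ h t ≤ s}.Nonempty := by
  refine ⟨max B 0, le_max_right _ _, ?_⟩
  have : {x | max B 0 < |h x|} = ∅ := by
    refine eq_empty_of_forall_notMem fun x hx => ?_
    exact absurd ((hB x).trans (le_max_left B 0)) (not_le.2 hx)
  rw [distrib, this]
  simpa using hs

lemma rearr_antitoneOn {B : ℝ} (hB : ∀ x, |h x| ≤ B) : AntitoneOn (rearr μ h) (Ici 0) := by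
  intro s hs s' _ hss
  exact csInf_le_csInf (rearr_bdd s') (rearr_ne hB hs) fun t ht => ⟨ht.1, ht.2.trans hss⟩

lemma meas_le_of_rearr_le {B : ℝ} (hB : ∀ x, |h x| ≤ B)
    (hfin : ∀ τ, 0 ≤ τ → μ {x | τ < |h x|} ≠ ∞) {s τ : ℝ} (hs : 0 ≤ s) (hτ : 0 ≤ τ)
    (hr : rearr μ h s ≤ τ) : μ {x | τ < |h x|} ≤ ENNReal.ofReal s := by
  have hU : {x | τ < |h x|} = ⋃ k : ℕ, {x | τ + 1 / ((k:ℝ) + 1) < |h x|} := by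
    ext x
    simp only [mem_ofPred_eq, mem_iUnion]
    constructor
    · intro hx
      obtain ⟨k, hk⟩ := exists_nat_one_div_lt (sub_pos.2 hx)
      exact ⟨k, by linarith⟩
    · rintro ⟨k, hk⟩
      have : 0 < 1 / ((k:ℝ) + 1) := by positivity
      linarith
  rw [hU, Monotone.measure_iUnion]
  · refine iSup_le fun k => ?_
    have hk : 0 < 1 / ((k:ℝ) + 1) := by positivity
    obtain ⟨t, ht, htl⟩ := exists_lt_of_csInf_lt (rearr_ne (μ := μ) hB hs)
      (show rearr μ h s < τ + 1 / ((k:ℝ) + 1) by linarith)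
    calc _ ≤ μ {x | t < |h x|} := measure_mono fun x hx => htl.trans hx
      _ ≤ ENNReal.ofReal s := by
        rw [← ENNReal.ofReal_toReal (hfin t ht.1)]
        exact ENNReal.ofReal_le_ofReal ht.2
  · intro i j hij x hx
    have hx' : τ + 1 / ((i:ℝ) + 1) < |h x| := hx
    refine lt_of_le_of_lt ?_ hx'
    have : 1 / ((j:ℝ) + 1) ≤ 1 / ((i:ℝ) + 1) := Nat.one_div_le_one_div hij
    linarith

lemma rearr_hardy {B : ℝ} (hB : ∀ x, |h x| ≤ B) (h0 : ∀ x, 0 ≤ h x) (hm : Measurable h)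
    (hfin : ∀ τ, 0 ≤ τ → μ {x | τ < |h x|} ≠ ∞) {E : Set α} {t : ℝ}
    (hE : μ E ≤ ENNReal.ofReal t) :
    ∫⁻ x in E, ENNReal.ofReal (h x) ∂μ ≤ ∫⁻ s in Ioc 0 t, ENNReal.ofReal (rearr μ h s) := by
  rw [lintegral_eq_lintegral_meas_lt _ (Eventually.of_forall h0) hm.aemeasurable,
    lintegral_eq_lintegral_meas_lt _ (Eventually.of_forall rearr_nonneg)
      (aemeasurable_restrict_of_antitoneOn measurableSet_Ioc
        ((rearr_antitoneOn hB).mono fun x hx => hx.1.le))]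
  refine setLIntegral_mono' measurableSet_Ioi fun τ hτ => ?_
  have hτ0 : (0:ℝ) < τ := hτ
  have hd : μ {x | τ < |h x|} = ENNReal.ofReal (distrib μ h τ) :=
    (ENNReal.ofReal_toReal (hfin τ hτ0.le)).symm
  calc μ.restrict E {x | τ < h x} ≤ ENNReal.ofReal (min t (distrib μ h τ)) := by
        rw [ENNReal.ofReal_min]
        refine le_min ?_ ?_
        · exact (measure_mono (subset_univ _)).trans (by simpa using hE)
        · rw [← hd]
          refine (Measure.restrict_apply_le _ _).trans (measure_mono fun x hx => ?_)
          have hx' : τ < h x := hx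
          exact lt_of_lt_of_le hx' (le_abs_self _)
    _ = volume (Ioo 0 (min t (distrib μ h τ))) := by simp
    _ = volume.restrict (Ioc 0 t) (Ioo 0 (min t (distrib μ h τ))) := by
        rw [Measure.restrict_eq_self]
        intro x hx
        exact ⟨hx.1, hx.2.le.trans (min_le_left _ _)⟩
    _ ≤ _ := by
        refine measure_mono fun s hs => ?_
        by_contra hcon
        have h1 := meas_le_of_rearr_le hB hfin hs.1.le hτ0.le (not_lt.1 hcon)
        rw [hd, ENNReal.ofReal_le_ofReal_iff hs.1.le] at h1
        exact absurd (hs.2.trans_le (min_le_right _ _)) (not_lt.2 h1)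

lemma rearr_osc {B : ℝ} (hB : ∀ x, |h x| ≤ B)
    (hfin : ∀ τ, 0 ≤ τ → μ {x | τ < |h x|} ≠ ∞) {s t : ℝ} (hs : 0 < s) (hst : s ≤ t) :
    ENNReal.ofReal (rearr2 μ h s - rearr μ h s) ≤ ENNReal.ofReal (1 / s) *
      ∫⁻ τ in Ioi (0:ℝ), min (ENNReal.ofReal s) (μ {x | rearr μ h t + τ < |h x|}) := by
  have hanti := rearr_antitoneOn (μ := μ) hB
  have hint : IntervalIntegrable (rearr μ h) volume 0 s :=
    (hanti.mono (by rw [uIcc_of_le hs.le]; exact fun x hx => hx.1)).intervalIntegrable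
  have hrt : rearr μ h t ≤ rearr μ h s := hanti hs.le (hs.le.trans hst) hst
  have hnn : ∀ u ∈ Ioc 0 s, 0 ≤ rearr μ h u - rearr μ h t := fun u hu =>
    sub_nonneg.2 (hanti hu.1.le (hs.le.trans hst) (hu.2.trans hst))
  have h1 : rearr2 μ h s - rearr μ h s ≤
      (1 / s) * ∫ u in Ioc 0 s, (rearr μ h u - rearr μ h t) := by
    rw [← intervalIntegral.integral_of_le hs.le,
      intervalIntegral.integral_sub hint (by simp), intervalIntegral.integral_const, rearr2]
    simp only [sub_zero, smul_eq_mul, mul_sub]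
    rw [← mul_assoc, one_div_mul_cancel hs.ne', one_mul]
    linarith
  refine (ENNReal.ofReal_le_ofReal h1).trans ?_
  rw [ENNReal.ofReal_mul (by positivity)]
  gcongr
  have hint2 : IntegrableOn (fun u => rearr μ h u - rearr μ h t) (Ioc 0 s) :=
    ((intervalIntegrable_iff_integrableOn_Ioc_of_le hs.le).1 hint).sub (by simp)
  have hnn' : 0 ≤ᵐ[volume.restrict (Ioc 0 s)] fun u => rearr μ h u - rearr μ h t := by
    filter_upwards [ae_restrict_mem measurableSet_Ioc] with u hu using hnn u hu
  rw [ofReal_integral_eq_lintegral_ofReal hint2 hnn',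
    lintegral_eq_lintegral_meas_lt _ hnn' hint2.aemeasurable]
  refine setLIntegral_mono' measurableSet_Ioi fun τ hτ => ?_
  have hτ0 : (0:ℝ) < τ := hτ
  have hp : 0 ≤ rearr μ h t + τ := add_nonneg (rearr_nonneg t) hτ0.le
  refine le_min ?_ ?_
  · exact (measure_mono (subset_univ _)).trans (by simp)
  · rw [Measure.restrict_apply' measurableSet_Ioc, ← ENNReal.ofReal_toReal (hfin _ hp)]
    calc _ ≤ volume (Ioo 0 (distrib μ h (rearr μ h t + τ))) := by
          refine measure_mono fun u hu => ⟨hu.2.1, ?_⟩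
          by_contra hcon
          have := rearr_le hp (not_lt.1 hcon)
          have h2 : τ < rearr μ h u - rearr μ h t := hu.1
          linarith
      _ = _ := by simp [distrib]

end rearrLemmas

lemma inner_int {β : ℝ} (hβ0 : 0 < β) (hβ1 : β < 1) (D : ℝ≥0∞) (hD : D ≠ ∞) :
    ∫⁻ s in Ioi (0:ℝ), ENNReal.ofReal (s ^ (-1 - β)) * min (ENNReal.ofReal s) D ≤
      ENNReal.ofReal (1 / β + 1 / (1 - β)) * D ^ (1 - β) := by
  obtain ⟨d, hd0, rfl⟩ : ∃ d : ℝ, 0 ≤ d ∧ D = ENNReal.ofReal d :=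
    ⟨D.toReal, ENNReal.toReal_nonneg, (ENNReal.ofReal_toReal hD).symm⟩
  rcases hd0.eq_or_lt with rfl | hd
  · simp
  rw [← Ioc_union_Ioi_eq_Ioi hd.le, ENNReal.ofReal_rpow_of_pos hd,
    ← ENNReal.ofReal_mul (by have : 0 < 1 - β := by linarith
                             positivity)]
  have hb : 0 < 1 - β := by linarith
  have e : (1 / β + 1 / (1 - β)) * d ^ (1 - β) = d ^ (1 - β) / (1 - β) + d * (d ^ (-β) / β) := by
    have : d ^ (1 - β) = d * d ^ (-β) := by
      rw [show 1 - β = 1 + -β by ring, Real.rpow_add hd, Real.rpow_one]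
    rw [this]; field_simp; ring
  rw [e, ENNReal.ofReal_add (by positivity) (by positivity)]
  refine (lintegral_union_le _ _ _).trans (add_le_add ?_ ?_)
  · calc _ ≤ ∫⁻ s in Ioc 0 d, ENNReal.ofReal (s ^ (-β)) := by
          refine setLIntegral_mono' measurableSet_Ioc fun s hs => ?_
          refine (mul_le_mul_right (min_le_left _ _) _).trans ?_
          rw [← ENNReal.ofReal_mul (Real.rpow_nonneg hs.1.le _)]
          refine le_of_eq ?_
          congr 1
          nth_rewrite 2 [← Real.rpow_one s]
          rw [← Real.rpow_add hs.1]; congr 1; ring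
      _ = _ := by
          rw [← ofReal_integral_eq_lintegral_ofReal]
          · rw [← intervalIntegral.integral_of_le hd.le, integral_rpow (Or.inl (by linarith)),
              Real.zero_rpow (by linarith)]
            congr 1; rw [sub_zero, show -β + 1 = 1 - β by ring]
          · exact (intervalIntegrable_iff_integrableOn_Ioc_of_le hd.le).1
              (intervalIntegral.intervalIntegrable_rpow' (by linarith))
          · filter_upwards [ae_restrict_mem measurableSet_Ioc] with s hs
            exact Real.rpow_nonneg hs.1.le _
  · calc _ ≤ ∫⁻ s in Ioi d, ENNReal.ofReal (s ^ (-1 - β)) * ENNReal.ofReal d := by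
          refine lintegral_mono fun s => ?_
          exact (mul_le_mul_right (min_le_right _ _) _)
      _ = _ := by
          rw [lintegral_mul_const' _ _ (by simp), ← ofReal_integral_eq_lintegral_ofReal]
          · rw [integral_Ioi_rpow_of_lt (by linarith) hd, mul_comm, ← ENNReal.ofReal_mul hd.le]
            congr 2
            rw [show -1 - β + 1 = -β by ring, neg_div_neg_eq]
          · exact integrableOn_Ioi_rpow_of_lt (by linarith) hd
          · filter_upwards [ae_restrict_mem measurableSet_Ioi] with s hs
            exact Real.rpow_nonneg (hd.trans hs).le _

lemma osc_main {α : Type*} [MeasurableSpace α] {μ : Measure α} {h : α → ℝ}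
    {B : ℝ} (hB : ∀ x, |h x| ≤ B)
    (hfin : ∀ τ, 0 ≤ τ → μ {x | τ < |h x|} ≠ ∞) {t β : ℝ} (hβ0 : 0 < β) (hβ1 : β < 1) :
    ∫⁻ s in Ioc 0 t, ENNReal.ofReal ((rearr2 μ h s - rearr μ h s) * s ^ (-β)) ≤
      ENNReal.ofReal (1 / β + 1 / (1 - β)) *
        ∫⁻ τ in Ioi (0:ℝ), (μ {x | rearr μ h t + τ < |h x|}) ^ (1 - β) := by
  set D : ℝ → ℝ≥0∞ := fun τ => μ {x | rearr μ h t + τ < |h x|} with hD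
  have hDm : Measurable D := by
    refine Antitone.measurable fun a b hab => measure_mono fun x hx => ?_
    have hx' : rearr μ h t + b < |h x| := hx
    show rearr μ h t + a < |h x|
    linarith
  have hrm : Measurable fun s : ℝ => ENNReal.ofReal (s ^ (-1 - β)) :=
    (measurable_id.pow_const _).ennreal_ofReal
  have hprod : Measurable fun q : ℝ × ℝ =>
      ENNReal.ofReal (q.1 ^ (-1 - β)) * min (ENNReal.ofReal q.1) (D q.2) :=
    (hrm.comp measurable_fst).mul
      ((ENNReal.measurable_ofReal.comp measurable_fst).min (hDm.comp measurable_snd))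
  calc _ ≤ ∫⁻ s in Ioc 0 t, ∫⁻ τ in Ioi (0:ℝ),
          ENNReal.ofReal (s ^ (-1 - β)) * min (ENNReal.ofReal s) (D τ) := by
        refine setLIntegral_mono' measurableSet_Ioc fun s hs => ?_
        have h1 := rearr_osc hB hfin hs.1 hs.2
        rw [lintegral_const_mul' _ _ (by simp), ENNReal.ofReal_mul' (Real.rpow_nonneg hs.1.le _),
          mul_comm]
        refine (mul_le_mul_right h1 _).trans (le_of_eq ?_)
        rw [← mul_assoc, ← ENNReal.ofReal_mul (Real.rpow_nonneg hs.1.le _)]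
        congr 2
        rw [one_div, ← Real.rpow_neg_one, ← Real.rpow_add hs.1]; congr 1; ring
    _ ≤ ∫⁻ s in Ioi 0, ∫⁻ τ in Ioi (0:ℝ),
          ENNReal.ofReal (s ^ (-1 - β)) * min (ENNReal.ofReal s) (D τ) :=
        lintegral_mono_set Ioc_subset_Ioi_self
    _ = ∫⁻ τ in Ioi (0:ℝ), ∫⁻ s in Ioi 0,
          ENNReal.ofReal (s ^ (-1 - β)) * min (ENNReal.ofReal s) (D τ) :=
        lintegral_lintegral_swap hprod.aemeasurable
    _ ≤ ∫⁻ τ in Ioi (0:ℝ), ENNReal.ofReal (1 / β + 1 / (1 - β)) * D τ ^ (1 - β) := by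
        refine setLIntegral_mono' measurableSet_Ioi fun τ hτ => ?_
        exact inner_int hβ0 hβ1 _ (hfin _ (add_nonneg (rearr_nonneg t) (le_of_lt hτ)))
    _ = _ := lintegral_const_mul' _ _ (by simp)

lemma integral_le_of_lintegral_le {α : Type*} [MeasurableSpace α] {μ : Measure α} {F : α → ℝ}
    {R : ℝ} (hR : 0 ≤ R) (hF : ∫⁻ x, ENNReal.ofReal (F x) ∂μ ≤ ENNReal.ofReal R) :
    ∫ x, F x ∂μ ≤ R := by
  by_cases hi : Integrable F μ
  · rw [integral_eq_lintegral_pos_part_sub_lintegral_neg_part hi]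
    have := ENNReal.toReal_mono (by simp) hF
    rw [ENNReal.toReal_ofReal hR] at this
    linarith [ENNReal.toReal_nonneg (a := ∫⁻ x, ENNReal.ofReal (-F x) ∂μ)]
  · rw [integral_undef hi]; exact hR

/-- For `n > 1` there is `C = C(n)` such that for every
`f ∈ Lip₀(ℝⁿ)` and `t > 0`, `∫₀ᵗ (f**(s) - f*(s)) s^{-1/n} ds ≤ C t |∇f|**(t)`. -/
theorem euclidean_integrated_oscillation_inequality (n : ℕ) (hn : 1 < n) :
    ∃ C : ℝ, 0 < C ∧ ∀ f : EuclideanSpace ℝ (Fin n) → ℝ,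
      (∃ K, LipschitzWith K f) → HasCompactSupport f → ∀ t : ℝ, 0 < t →
        ∫ s in (0:ℝ)..t, (rearr2 volume f s - rearr volume f s) * s ^ (-(1:ℝ) / (n:ℝ)) ≤
          C * t * rearr2 volume (fun x => ‖fderiv ℝ f x‖) t := by
  have hn1 : (1:ℝ≥0) < n := by exact_mod_cast hn
  have hn1' : (1:ℝ) < n := by exact_mod_cast hn
  set p : ℝ≥0 := NNReal.conjExponent n with hpdef
  have hp : NNReal.HolderConjugate n p := NNReal.HolderConjugate.conjExponent hn1
  set β : ℝ := 1 / n with hβ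
  have hβ0 : 0 < β := by positivity
  have hβ1 : β < 1 := by rw [hβ, div_lt_one (by positivity)]; exact hn1'
  have hpβ : 1 - β = 1 / (p:ℝ) := by
    have h1 := hp.coe.inv_add_inv_eq_one
    have h2 : ((n:ℝ≥0):ℝ) = n := by simp
    rw [h2] at h1
    rw [hβ, one_div, one_div]; linarith
  set c : ℝ := ((eLpNormLESNormFDerivOneConst
      (volume : Measure (EuclideanSpace ℝ (Fin n))) p : ℝ≥0) : ℝ) with hc
  have hc0 : 0 ≤ c := NNReal.coe_nonneg _
  set A : ℝ := 1 / β + 1 / (1 - β) with hA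
  have hA0 : 0 < A := by
    have : 0 < 1 - β := by linarith
    positivity
  refine ⟨A * (c + 1), by positivity, ?_⟩
  rintro f ⟨K, hf⟩ hcs t ht
  set g : EuclideanSpace ℝ (Fin n) → ℝ := fun x => ‖fderiv ℝ f x‖ with hg
  -- facts about f
  obtain ⟨B, hB⟩ := hcs.exists_bound_of_continuous hf.continuous
  have hfinf : ∀ τ, 0 ≤ τ → volume {x | τ < |f x|} ≠ ∞ := fun τ hτ => by
    refine ((measure_mono fun x hx => ?_).trans_lt (IsCompact.measure_lt_top hcs)).ne
    refine subset_tsupport f (abs_pos.1 (lt_of_le_of_lt hτ hx))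
  have hgB : ∀ x, |g x| ≤ K := fun x => by
    rw [hg, abs_of_nonneg (norm_nonneg _)]
    exact norm_fderiv_le_of_lipschitz ℝ hf
  have hfing : ∀ τ, 0 ≤ τ → volume {x | τ < |g x|} ≠ ∞ := fun τ hτ => by
    refine ((measure_mono fun x hx => ?_).trans_lt
      (IsCompact.measure_lt_top (hcs.fderiv (𝕜 := ℝ)))).ne
    have : g x ≠ 0 := abs_pos.1 (lt_of_le_of_lt hτ hx)
    exact subset_tsupport (fderiv ℝ f) (norm_ne_zero_iff.1 this)
  have hgm : Measurable g := (measurable_fderiv ℝ f).norm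
  set J : ℝ := ∫ s in Ioc 0 t, rearr volume g s with hJ
  have hJint : IntegrableOn (rearr volume g) (Ioc 0 t) :=
    (intervalIntegrable_iff_integrableOn_Ioc_of_le ht.le).1
      ((rearr_antitoneOn hgB).mono
        (by rw [uIcc_of_le ht.le]; exact fun x hx => hx.1)).intervalIntegrable
  have hJ0 : 0 ≤ J := integral_nonneg fun s => rearr_nonneg s
  have hrhs : A * (c + 1) * t * rearr2 volume g t = A * (c + 1) * J := by
    rw [rearr2, intervalIntegral.integral_of_le ht.le, ← hJ]; field_simp
  rw [hrhs, intervalIntegral.integral_of_le ht.le]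
  refine integral_le_of_lintegral_le (by positivity) ?_
  have hexp : -(1:ℝ) / n = -β := by rw [hβ]; ring
  rw [hexp]
  have hl := rearr_nonneg (μ := volume) (h := f) t
  refine (osc_main (fun x => hB x) hfinf hβ0 hβ1).trans ?_
  rw [hpβ, mul_assoc, ENNReal.ofReal_mul hA0.le, ← hpβ]
  refine mul_le_mul_right ?_ _
  rw [hpβ]
  refine (strong_level hp f hf hcs hl (hfinf _ hl)).trans ?_
  rw [ENNReal.ofReal_mul (by positivity)]
  refine mul_le_mul' ?_ ?_
  · rw [← ENNReal.ofReal_coe_nnreal]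
    exact ENNReal.ofReal_le_ofReal (by linarith)
  · rw [hJ, ofReal_integral_eq_lintegral_ofReal hJint (Eventually.of_forall rearr_nonneg)]
    refine le_trans (le_of_eq ?_) (rearr_hardy hgB (fun x => norm_nonneg _) hgm hfing
      (meas_le_of_rearr_le (fun x => hB x) hfinf ht.le hl le_rfl))
    exact lintegral_congr fun x => (ofReal_norm_eq_enorm _).symm
end
end
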